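/- arXiv:1906.00264 — 4 statements merged into one kernel-verified Lean document; each statement's English description precedes it below -/
import Mathlib

section
/- Let V be a countable vertex set, k ≥ 2, G a k-distinguishing class over V, and p₁, p₂ probability distributions on V. Suppose that for some vertex v ∈ V one has IPM_{G_v}(p₁,p₂) ≥ ε, where G_v = {g_v : g ∈ G} and g_v(u₁,…,u_{k−1}) = g(v,u₁,…,u_{k−1}). For q ∈ [0,1] and a distribution p on V define p^q = q·δ_v + (1−q)·p, where δ_v is the point mass at v. Then there exists q ∈ {0, 1/k, 2/k, …, 1} such that IPM_G(p₁^q, p₂^q) ≥ ε / 2^{3k²}. -/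
open scoped BigOperators

namespace GraphDisc

/-- A `k`-distinguisher is symmetric: invariant under all permutations of arguments. -/
def IsSymmetric {V : Type*} {k : ℕ} (g : (Fin k → V) → Bool) : Prop :=
  ∀ (σ : Equiv.Perm (Fin k)) (w : Fin k → V), g (w ∘ σ) = g w

/-- A `k`-distinguishing class: a family of symmetric Boolean `k`-ary functions. -/
def IsDistinguishingClass {V : Type*} {k : ℕ} (G : Set ((Fin k → V) → Bool)) : Prop :=
  ∀ g ∈ G, IsSymmetric g

/-- `p` is a probability distribution on `V` (as a mass function). -/
def IsDist {V : Type*} (p : V → ℝ) : Prop := (∀ v, 0 ≤ p v) ∧ HasSum p 1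

/-- `L_P(g)`: expected value of `g` on a `k`-tuple of i.i.d. samples from `p`. -/
noncomputable def LP {V : Type*} {k : ℕ} (p : V → ℝ) (g : (Fin k → V) → Bool) : ℝ :=
  ∑' w : Fin k → V, (∏ i, p (w i)) * (if g w then 1 else 0)

/-- `L_S(g)`: empirical frequency of `g` on all `k`-tuples from the sample `S`. -/
noncomputable def LS {V : Type*} {k m : ℕ} (S : Fin m → V) (g : (Fin k → V) → Bool) : ℝ :=
  (∑ t : Fin k → Fin m, if g (S ∘ t) then (1 : ℝ) else 0) / (m : ℝ) ^ k

/-- Probability of an event `E` under an i.i.d. sample of size `m` from `p`. -/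
noncomputable def Prob {V : Type*} (p : V → ℝ) {m : ℕ} (E : Set (Fin m → V)) : ℝ :=
  ∑' S : Fin m → V, E.indicator (fun S => ∏ i, p (S i)) S

/-- Probability of an event `E` under two independent i.i.d. samples of size `m`. -/
noncomputable def Prob2 {V : Type*} (p₁ p₂ : V → ℝ) {m : ℕ}
    (E : Set ((Fin m → V) × (Fin m → V))) : ℝ :=
  ∑' S : (Fin m → V) × (Fin m → V),
    E.indicator (fun S => (∏ i, p₁ (S.1 i)) * ∏ i, p₂ (S.2 i)) S

/-- IPM distance induced by a class of `k`-ary distinguishers. -/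
noncomputable def IPM {V : Type*} {k : ℕ} (G : Set ((Fin k → V) → Bool))
    (p₁ p₂ : V → ℝ) : ℝ :=
  ⨆ g ∈ G, |LP p₁ g - LP p₂ g|

/-- `L_P(d)` for a unary Boolean function `d`. -/
noncomputable def LP1 {V : Type*} (p : V → ℝ) (d : V → Bool) : ℝ :=
  ∑' v : V, p v * (if d v then 1 else 0)

/-- IPM distance for a family of unary Boolean functions. -/
noncomputable def IPM1 {V : Type*} (D : Set (V → Bool)) (p₁ p₂ : V → ℝ) : ℝ :=
  ⨆ d ∈ D, |LP1 p₁ d - LP1 p₂ d|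

/-- `L_P(g)` for a binary (curried) Boolean function `g`. -/
noncomputable def LP2 {V : Type*} (p : V → ℝ) (g : V → V → Bool) : ℝ :=
  ∑' w : V × V, (p w.1 * p w.2) * (if g w.1 w.2 then 1 else 0)

/-- `D` shatters the finite set `T`: every Boolean pattern on `T` is realized in `D`. -/
def Shatters {X : Type*} (D : Set (X → Bool)) (T : Finset X) : Prop :=
  ∀ f : X → Bool, ∃ d ∈ D, ∀ x ∈ T, d x = f x

/-- The VC dimension of a family of Boolean functions. -/
noncomputable def vcDim {X : Type*} (D : Set (X → Bool)) : ℕ∞ :=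
  ⨆ T ∈ {T : Finset X | Shatters D T}, (T.card : ℕ∞)

/-- Fixing the first argument of a `(k+1)`-ary function to `v`. -/
def proj {V : Type*} {k : ℕ} (v : V) (g : (Fin (k + 1) → V) → Bool) :
    (Fin k → V) → Bool := fun u => g (Fin.cons v u)

/-- The graph VC dimension, defined inductively: for `k = 1` it is the usual VC
dimension; for `k > 1` it is the supremum over `v` of the graph VC dimension of the
projected class `G_v`. -/
noncomputable def gvcDim {V : Type*} : (k : ℕ) → Set ((Fin k → V) → Bool) → ℕ∞
  | 0, G => vcDim G
  | 1, G => vcDim G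
  | (k + 2), G => ⨆ v : V, gvcDim (k + 1) (proj v '' G)

open Classical in
/-- Mixture `q·δ_v + (1−q)·p`. -/
noncomputable def mix {V : Type*} (q : ℝ) (v : V) (p : V → ℝ) : V → ℝ :=
  fun u => q * (if u = v then 1 else 0) + (1 - q) * p u

/-- The class of majority-vote threshold functions over `m`-tuples from `D`. -/
noncomputable def thresholdClass {V : Type*} (D : Set (V → Bool)) (m : ℕ) :
    Set (V → Bool) :=
  {h | ∃ d : Fin m → (V → Bool), (∀ i, d i ∈ D) ∧
        h = fun v => decide ((0 : ℝ) ≤ ∑ i, (2 * (if d i v then (1 : ℝ) else 0) - 1))}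

open Polynomial in
lemma aux_poly (k : ℕ) (P : ℝ[X]) (hP : P.natDegree ≤ k) (hk : 0 < k) (M : ℝ)
    (hM : ∀ j : ℕ, j ≤ k → |P.eval (j : ℝ)| ≤ M) : |P.coeff 1| ≤ 2 ^ (k + 1) * M := by
  have hQ : P.divX.natDegree < k := by
    rw [Polynomial.natDegree_divX_eq_natDegree_tsub_one]; omega
  have h0 : P.divX.eval 0 = P.coeff 1 := by
    rw [← Polynomial.coeff_zero_eq_eval_zero, Polynomial.coeff_divX]
  have hM0 : 0 ≤ M := le_trans (abs_nonneg _) (hM 0 (Nat.zero_le _))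
  have hb : ∀ j : ℕ, j < k → |P.divX.eval ((j + 1 : ℕ) : ℝ)| ≤ 2 * M := by
    intro j hj
    have e : P.eval ((j + 1 : ℕ) : ℝ)
        = P.divX.eval ((j + 1 : ℕ) : ℝ) * ((j + 1 : ℕ) : ℝ) + P.eval ((0 : ℕ) : ℝ) := by
      conv_lhs => rw [← Polynomial.divX_mul_X_add P]
      simp [Polynomial.coeff_zero_eq_eval_zero]
    have h1 := hM (j + 1) (by omega)
    have h2 := hM 0 (by omega)
    have h3 : |P.divX.eval ((j + 1 : ℕ) : ℝ) * ((j + 1 : ℕ) : ℝ)| ≤ 2 * M := by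
      have : P.divX.eval ((j + 1 : ℕ) : ℝ) * ((j + 1 : ℕ) : ℝ)
        = P.eval ((j + 1 : ℕ) : ℝ) - P.eval ((0 : ℕ) : ℝ) := by rw [e]; ring
      rw [this]
      have := abs_sub (P.eval ((j + 1 : ℕ) : ℝ)) (P.eval ((0 : ℕ) : ℝ))
      linarith
    refine le_trans ?_ h3
    rw [abs_mul]
    refine le_mul_of_one_le_right (abs_nonneg _) ?_
    rw [abs_of_nonneg (by positivity)]
    push_cast
    linarith [(Nat.cast_nonneg j : (0 : ℝ) ≤ j)]
  have hz := congrFun (Polynomial.fwdDiff_iter_eq_zero_of_degree_lt hQ) 0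
  rw [fwdDiff_iter_eq_sum_shift, Finset.sum_range_succ'] at hz
  simp only [zero_add, nsmul_eq_mul, mul_one, Pi.zero_apply, Nat.choose_zero_right,
    Nat.cast_zero, h0, Nat.sub_zero, Nat.cast_one, zsmul_eq_mul] at hz
  have hc : |P.coeff 1| = |∑ j ∈ Finset.range k,
      ((((-1 : ℤ) ^ (k - (j + 1)) * (k.choose (j + 1) : ℤ) : ℤ)) : ℝ)
        * P.divX.eval ((j + 1 : ℕ) : ℝ)| := by
    rw [eq_neg_of_add_eq_zero_left hz, abs_neg, abs_mul]
    simp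
  rw [hc]
  calc _ ≤ ∑ j ∈ Finset.range k, (k.choose (j + 1) : ℝ) * (2 * M) := by
        refine (Finset.abs_sum_le_sum_abs _ _).trans (Finset.sum_le_sum fun j hj => ?_)
        rw [abs_mul]
        have : |((((-1 : ℤ) ^ (k - (j + 1)) * (k.choose (j + 1) : ℤ) : ℤ)) : ℝ)|
          = (k.choose (j + 1) : ℝ) := by
          push_cast
          rw [abs_mul]; simp
        rw [this]
        exact mul_le_mul_of_nonneg_left (hb j (Finset.mem_range.1 hj)) (by positivity)
    _ ≤ 2 ^ k * (2 * M) := by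
        rw [← Finset.sum_mul]
        refine mul_le_mul_of_nonneg_right ?_ (by positivity)
        have := Nat.sum_range_choose k
        rw [Finset.sum_range_succ'] at this
        have h : ∑ j ∈ Finset.range k, k.choose (j + 1) ≤ 2 ^ k := by omega
        exact_mod_cast h
    _ = _ := by ring

lemma aux_summable {V : Type*} : ∀ (k : ℕ) (r : Fin k → V → ℝ), (∀ i u, 0 ≤ r i u) →
    (∀ i, Summable (r i)) → Summable (fun w : Fin k → V => ∏ i, r i (w i)) := by
  intro k
  induction k with
  | zero => intro r _ _; exact (hasSum_fintype _).summable
  | succ k ih =>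
    intro r h0 hs
    have h := (hs 0).mul_of_nonneg (ih (fun i => r i.succ) (fun i => h0 _) (fun i => hs _))
      (h0 0) (fun w => Finset.prod_nonneg fun i _ => h0 _ _)
    rw [← (Fin.consEquiv (fun _ : Fin (k + 1) => V)).summable_iff]
    refine h.congr ?_
    rintro ⟨a, w⟩
    simp [Fin.prod_univ_succ, Fin.consEquiv]

lemma aux_summable_g {V : Type*} {k : ℕ} (r : Fin k → V → ℝ) (h0 : ∀ i u, 0 ≤ r i u)
    (hs : ∀ i, Summable (r i)) (g : (Fin k → V) → Bool) :
    Summable (fun w : Fin k → V => (∏ i, r i (w i)) * (if g w then (1 : ℝ) else 0)) := by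
  refine (aux_summable k r h0 hs).of_nonneg_of_le (fun w => ?_) (fun w => ?_)
  · have := Finset.prod_nonneg (s := Finset.univ) fun i _ => h0 i (w i)
    positivity
  · have := Finset.prod_nonneg (s := Finset.univ) fun i _ => h0 i (w i)
    split_ifs <;> simp [this]

lemma LP_abs_le {V : Type*} {k : ℕ} (p : V → ℝ) (h0 : ∀ u, 0 ≤ p u) (hs : Summable p)
    (g : (Fin k → V) → Bool) : |LP p g| ≤ ∑' w : Fin k → V, ∏ i, p (w i) := by
  have a := aux_summable_g (fun _ : Fin k => p) (fun _ => h0) (fun _ => hs) g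
  have b := aux_summable k (fun _ : Fin k => p) (fun _ => h0) (fun _ => hs)
  have hn : ∀ w : Fin k → V, 0 ≤ ∏ i, p (w i) := fun w => Finset.prod_nonneg fun i _ => h0 _
  unfold LP
  rw [abs_of_nonneg (tsum_nonneg fun w => by have := hn w; positivity)]
  refine a.tsum_le_tsum (fun w => ?_) b
  have := hn w
  split_ifs <;> simp [this]

lemma le_IPM {V : Type*} {k : ℕ} (G : Set ((Fin k → V) → Bool)) (p₁ p₂ : V → ℝ)
    (h1 : ∀ u, 0 ≤ p₁ u) (hs1 : Summable p₁) (h2 : ∀ u, 0 ≤ p₂ u) (hs2 : Summable p₂)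
    (g : (Fin k → V) → Bool) (hg : g ∈ G) : |LP p₁ g - LP p₂ g| ≤ IPM G p₁ p₂ := by
  unfold IPM
  set B := (∑' w : Fin k → V, ∏ i, p₁ (w i)) + ∑' w : Fin k → V, ∏ i, p₂ (w i)
  have hB : ∀ g : (Fin k → V) → Bool, |LP p₁ g - LP p₂ g| ≤ B := fun g =>
    (abs_sub _ _).trans (add_le_add (LP_abs_le p₁ h1 hs1 g) (LP_abs_le p₂ h2 hs2 g))
  have hB0 : 0 ≤ B := (abs_nonneg _).trans (hB g)
  have e : (⨆ (_ : g ∈ G), |LP p₁ g - LP p₂ g|) = |LP p₁ g - LP p₂ g| := by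
    haveI : Nonempty (g ∈ G) := ⟨hg⟩
    exact ciSup_const
  rw [← e]
  refine le_ciSup (f := fun g => ⨆ (_ : g ∈ G), |LP p₁ g - LP p₂ g|) ⟨B, ?_⟩ g
  rintro _ ⟨g', rfl⟩
  exact Real.iSup_le (fun _ => hB g') hB0

/-- mixed expectation -/
noncomputable def AS {V : Type*} {k : ℕ} (v : V) (p : V → ℝ) (g : (Fin k → V) → Bool)
    (S : Finset (Fin k)) : ℝ :=
  open Classical in
  ∑' w : Fin k → V, (∏ i, (if i ∈ S then (fun u => if u = v then (1 : ℝ) else 0) else p) (w i))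
    * (if g w then 1 else 0)

lemma LP_mix {V : Type*} {k : ℕ} (v : V) (p : V → ℝ) (h0 : ∀ u, 0 ≤ p u) (hs : Summable p)
    (g : (Fin k → V) → Bool) (q : ℝ) :
    LP (mix q v p) g = ∑ S ∈ (Finset.univ : Finset (Fin k)).powerset,
      AS v p g S * (q ^ S.card * (1 - q) ^ (k - S.card)) := by
  classical
  unfold LP AS mix
  simp_rw [← tsum_mul_right]
  rw [← Summable.tsum_finsetSum]
  · refine tsum_congr fun w => ?_
    rw [Finset.prod_add, Finset.sum_mul]
    refine Finset.sum_congr rfl fun S _ => ?_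
    rw [Finset.prod_mul_distrib, Finset.prod_mul_distrib, Finset.prod_const, Finset.prod_const,
      Finset.card_univ_diff, Fintype.card_fin]
    have : (∏ i, (if i ∈ S then (fun u => if u = v then (1 : ℝ) else 0) else p) (w i))
      = (∏ i ∈ S, (if w i = v then (1 : ℝ) else 0)) * ∏ i ∈ Finset.univ \ S, p (w i) := by
      rw [← Finset.prod_sdiff (Finset.subset_univ S), mul_comm]
      congr 1
      · exact Finset.prod_congr rfl fun i hi => by simp [hi]
      · exact Finset.prod_congr rfl fun i hi => by simp [(Finset.mem_sdiff.1 hi).2]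
    rw [this]
    ring
  · intro S _
    refine Summable.mul_right _ ?_
    refine aux_summable_g (fun i => if i ∈ S then (fun u => if u = v then (1 : ℝ) else 0) else p)
      ?_ ?_ g
    · intro i u
      split_ifs
      · dsimp only
        split_ifs <;> norm_num
      · exact h0 u
    · intro i
      split_ifs
      · exact (hasSum_ite_eq v (1 : ℝ)).summable
      · exact hs

lemma AS_empty {V : Type*} {k : ℕ} (v : V) (p : V → ℝ) (g : (Fin k → V) → Bool) :
    AS v p g ∅ = LP p g := by
  simp [AS, LP]

lemma AS_single {V : Type*} {k : ℕ} (v : V) (p : V → ℝ) (g : (Fin (k + 1) → V) → Bool)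
    (hg : IsSymmetric g) (i : Fin (k + 1)) :
    AS v p g {i} = LP p (proj v g) := by
  classical
  unfold AS LP proj
  have hinj : Function.Injective (fun u : Fin k → V => (i.insertNth v u : Fin (k + 1) → V)) :=
    fun a b h => by
      have := congrArg (fun w : Fin (k + 1) → V => i.removeNth w) h
      simpa using this
  rw [← hinj.tsum_eq]
  · refine tsum_congr fun u => ?_
    rw [Fin.prod_univ_succAbove _ i, ← Fin.cons_comp_cycleRange, hg, Fin.cons_comp_cycleRange]
    simp [Fin.succAbove_ne]
  · intro w hw
    refine ⟨i.removeNth w, ?_⟩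
    have : w i = v := by
      by_contra h
      apply hw
      dsimp only
      rw [Finset.prod_eq_zero (Finset.mem_univ i), zero_mul]
      simp [h]
    dsimp only
    rw [← this]
    exact Fin.insertNth_self_removeNth i w

lemma mix_nonneg {V : Type*} (q : ℝ) (hq : 0 ≤ q) (hq1 : q ≤ 1) (v : V) (p : V → ℝ)
    (h0 : ∀ u, 0 ≤ p u) (u : V) : 0 ≤ mix q v p u := by
  unfold mix
  have := h0 u
  have : 0 ≤ 1 - q := by linarith
  positivity

lemma mix_summable {V : Type*} (q : ℝ) (v : V) (p : V → ℝ)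
    (hs : Summable p) : Summable (mix q v p) := by
  classical
  unfold mix
  refine Summable.add (Summable.mul_left _ ?_) (hs.mul_left _)
  convert (hasSum_ite_eq v (1 : ℝ)).summable

open Polynomial in
lemma aux_coeff (k : ℕ) (hk : 0 < k) (a : Finset (Fin k) → ℝ) (D : ℝ) (hD : ∀ i, a {i} = D)
    (M : ℝ)
    (hM : ∀ j : ℕ, j ≤ k → |∑ S ∈ (Finset.univ : Finset (Fin k)).powerset,
      a S * (((j : ℝ) / k) ^ S.card * (1 - (j : ℝ) / k) ^ (k - S.card))| ≤ M) :
    |D| ≤ (2 ^ (k + 1) + 1) * M := by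
  have hk' : (k : ℝ) ≠ 0 := by positivity
  set Y : ℝ[X] := C (1 / (k : ℝ)) * X with hY
  set T : ℕ → ℝ[X] := fun s => Y ^ s * (1 - Y) ^ (k - s) with hT
  set P : ℝ[X] := ∑ S ∈ (Finset.univ : Finset (Fin k)).powerset, C (a S) * T S.card with hPd
  have hYd : Y.natDegree ≤ 1 := (natDegree_C_mul_le _ _).trans natDegree_X_le
  have hdeg : P.natDegree ≤ k := by
    refine natDegree_sum_le_of_forall_le _ _ fun S _ => ?_
    refine (natDegree_C_mul_le _ _).trans ?_
    have hc : S.card ≤ k := by simpa using Finset.card_le_univ S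
    have h1 : (Y ^ S.card).natDegree ≤ S.card * 1 := natDegree_pow_le_of_le _ hYd
    have h2 : ((1 - Y) ^ (k - S.card)).natDegree ≤ (k - S.card) * 1 :=
      natDegree_pow_le_of_le _ ((natDegree_sub_le _ _).trans (by simp [hYd]))
    refine natDegree_mul_le.trans ?_
    omega
  have hev : ∀ x : ℝ, P.eval x = ∑ S ∈ (Finset.univ : Finset (Fin k)).powerset,
      a S * ((x / k) ^ S.card * (1 - x / k) ^ (k - S.card)) := by
    intro x
    simp only [hPd, hT, hY, eval_finset_sum, eval_mul, eval_pow, eval_sub, eval_C, eval_X, eval_one]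
    simp only [div_eq_inv_mul, mul_one]

  have hb := aux_poly k P hdeg hk M (fun j hj => by rw [hev]; exact hM j hj)
  have h0 := hM 0 (Nat.zero_le _)
  have c1 : ∀ Q : ℝ[X], Q.coeff 1 = (derivative Q).eval 0 := by
    intro Q
    rw [← coeff_zero_eq_eval_zero, coeff_derivative]; simp
  have t0 : (T 0).coeff 1 = -1 := by
    rw [c1]
    simp [hT, hY, derivative_pow]
    field_simp
  have t1 : (T 1).coeff 1 = 1 / k := by
    rw [c1]
    simp [hT, hY, derivative_pow]
  have t2 : ∀ s, (T (s + 2)).coeff 1 = 0 := by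
    intro s
    rw [c1]
    simp [hT, hY, derivative_pow]
  obtain ⟨m, rfl⟩ : ∃ m, k = m + 1 := ⟨k - 1, by omega⟩
  have hc : P.coeff 1 = D - a ∅ := by
    rw [hPd, finset_sum_coeff]
    simp only [coeff_C_mul]
    rw [Finset.sum_powerset, Finset.card_univ, Fintype.card_fin, Finset.sum_range_succ',
      Finset.sum_range_succ']
    rw [Finset.sum_eq_zero]
    · simp only [Finset.powersetCard_zero, Finset.sum_singleton, Finset.card_empty, t0,
        zero_add, Finset.powersetCard_one, Finset.sum_map]
      simp [t1, hD]
      field_simp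
      ring
    · intro s _
      refine Finset.sum_eq_zero fun S hS => ?_
      rw [(Finset.mem_powersetCard.1 hS).2, t2, mul_zero]
  have hz : P.eval 0 = a ∅ := by
    rw [hev, Finset.sum_eq_single ∅]
    · simp
    · intro S _ hS
      have : S.card ≠ 0 := by simpa using hS
      simp [this]
    · simp
  have h0' : |a ∅| ≤ M := by
    rw [← hz, hev]; simpa using h0
  rw [hc] at hb
  have := abs_add_le (D - a ∅) (a ∅)
  rw [sub_add_cancel] at this
  linarith

/-- the mixing lemma (Lemma `lowerbound`), stated with `k = n + 2 ≥ 2`. -/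
theorem stmt6 (V : Type) [Countable V] (n : ℕ)
    (G : Set ((Fin (n + 2) → V) → Bool)) (hG : IsDistinguishingClass G)
    (p₁ p₂ : V → ℝ) (h₁ : IsDist p₁) (h₂ : IsDist p₂)
    (v : V) (ε : ℝ) (hv : IPM (proj v '' G) p₁ p₂ ≥ ε) :
    ∃ j : ℕ, j ≤ n + 2 ∧
      IPM G (mix ((j : ℝ) / (n + 2)) v p₁) (mix ((j : ℝ) / (n + 2)) v p₂)
        ≥ ε / 2 ^ (3 * (n + 2) ^ 2) := by
  classical
  have hn0 : (0 : ℝ) < (n : ℝ) + 2 := by positivity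
  set I : ℕ → ℝ := fun j =>
    IPM G (mix ((j : ℝ) / (n + 2)) v p₁) (mix ((j : ℝ) / (n + 2)) v p₂) with hI
  by_contra hcon
  push Not at hcon
  obtain ⟨j₀, hj₀, hmax⟩ := Finset.exists_max_image (Finset.range (n + 3)) I ⟨0, by simp⟩
  have hI0 : 0 ≤ I j₀ :=
    Real.iSup_nonneg fun g => Real.iSup_nonneg fun _ => abs_nonneg _
  have hlt : I j₀ < ε / 2 ^ (3 * (n + 2) ^ 2) :=
    hcon j₀ (by have := Finset.mem_range.1 hj₀; omega)
  rw [lt_div_iff₀ (by positivity)] at hlt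
  have hkey : ∀ g ∈ G, |LP p₁ (proj v g) - LP p₂ (proj v g)|
      ≤ (2 ^ (n + 2 + 1) + 1) * I j₀ := by
    intro g hg
    refine aux_coeff (n + 2) (by omega) (fun S => AS v p₁ g S - AS v p₂ g S) _
      (fun i => by rw [AS_single v p₁ g (hG g hg), AS_single v p₂ g (hG g hg)]) _ ?_
    intro j hj
    have hj' : (j : ℝ) ≤ n + 2 := by exact_mod_cast hj
    have hq0 : 0 ≤ (j : ℝ) / (n + 2) := by positivity
    have hq1 : (j : ℝ) / (n + 2) ≤ 1 := by rw [div_le_one hn0]; exact hj'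
    refine le_trans (le_of_eq ?_) ((le_IPM G (mix ((j : ℝ) / (n + 2)) v p₁)
      (mix ((j : ℝ) / (n + 2)) v p₂) (mix_nonneg _ hq0 hq1 v _ h₁.1)
      (mix_summable _ v _ h₁.2.summable) (mix_nonneg _ hq0 hq1 v _ h₂.1)
      (mix_summable _ v _ h₂.2.summable) g hg).trans
      (hmax j (Finset.mem_range.2 (by omega))))
    rw [LP_mix v p₁ h₁.1 h₁.2.summable, LP_mix v p₂ h₂.1 h₂.2.summable, ← Finset.sum_sub_distrib]
    congr 1
    refine Finset.sum_congr rfl fun S _ => ?_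
    push_cast
    ring
  have hle : IPM (proj v '' G) p₁ p₂ ≤ (2 ^ (n + 2 + 1) + 1) * I j₀ := by
    refine Real.iSup_le (fun d => Real.iSup_le ?_ (by positivity)) (by positivity)
    rintro ⟨g, hg, rfl⟩
    exact hkey g hg
  have hpow : (2 : ℝ) ^ (n + 2 + 1) + 1 ≤ 2 ^ (3 * (n + 2) ^ 2) := by
    calc (2 : ℝ) ^ (n + 2 + 1) + 1 ≤ 2 ^ (n + 2 + 1) + 2 ^ (n + 2 + 1) := by
          gcongr; exact one_le_pow₀ (by norm_num)
      _ = 2 ^ (n + 4) := by ring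
      _ ≤ _ := pow_le_pow_right₀ (by norm_num) (by nlinarith)
  have := mul_le_mul_of_nonneg_right hpow hI0
  linarith

end GraphDisc
end

section
/- Let V = ℕ. There exists a single symmetric Boolean function g : V × V → {0,1} (a 2-distinguisher) such that: for every family D of Boolean functions d : V → {0,1} with finite VC dimension and every ε > 0, there exist probability distributions p₁, p₂ on V with IPM_D(p₁,p₂) < ε and |L_{p₁}(g) − L_{p₂}(g)| > 1/2. -/
open scoped BigOperators

namespace GraphDisc

/-- Indicator. -/
noncomputable def ind (b : Bool) : ℝ := if b then 1 else 0

lemma ind_nonneg (b : Bool) : 0 ≤ ind b := by cases b <;> simp [ind]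
lemma ind_le_one (b : Bool) : ind b ≤ 1 := by cases b <;> simp [ind]

/-- Finitely supported mass function. -/
noncomputable def fin_mass {J : Type} [Fintype J] (w : J → ℝ) (y : J → ℕ) : ℕ → ℝ :=
  fun v => ∑ j, if v = y j then w j else 0

lemma fin_mass_isDist {J : Type} [Fintype J] (w : J → ℝ) (y : J → ℕ) (hw : ∀ j, 0 ≤ w j)
    (h1 : ∑ j, w j = 1) : IsDist (fin_mass w y) := by
  refine ⟨fun v => Finset.sum_nonneg fun j _ => ?_, ?_⟩
  · split_ifs
    · exact hw j
    · exact le_rfl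
  · rw [← h1]
    exact hasSum_sum fun j _ => hasSum_ite_eq (y j) (w j)

lemma fin_mass_LP1 {J : Type} [Fintype J] (w : J → ℝ) (y : J → ℕ) (d : ℕ → Bool) :
    LP1 (fin_mass w y) d = ∑ j, w j * ind (d (y j)) := by
  have h : HasSum (fun v => ∑ j, if v = y j then w j * ind (d (y j)) else 0)
      (∑ j, w j * ind (d (y j))) :=
    hasSum_sum fun j _ => hasSum_ite_eq (y j) _
  rw [← h.tsum_eq, LP1]
  refine tsum_congr fun v => ?_
  rw [fin_mass, Finset.sum_mul]
  refine Finset.sum_congr rfl fun j _ => ?_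
  by_cases hv : v = y j
  · subst hv; simp [ind]
  · simp [hv]

lemma fin_mass_LP2 {J : Type} [Fintype J] (w : J → ℝ) (y : J → ℕ) (g : ℕ → ℕ → Bool) :
    LP2 (fin_mass w y) g = ∑ j, ∑ k, w j * w k * ind (g (y j) (y k)) := by
  have h : HasSum (fun v : ℕ × ℕ => ∑ j, ∑ k, if v = (y j, y k) then
      w j * w k * ind (g (y j) (y k)) else 0)
      (∑ j, ∑ k, w j * w k * ind (g (y j) (y k))) :=
    hasSum_sum fun j _ => hasSum_sum fun k _ => hasSum_ite_eq (y j, y k) _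
  rw [← h.tsum_eq, LP2]
  refine tsum_congr fun v => ?_
  obtain ⟨a, b⟩ := v
  simp only [fin_mass]
  rw [Finset.sum_mul_sum, Finset.sum_mul]
  refine Finset.sum_congr rfl fun j _ => ?_
  rw [Finset.sum_mul]
  refine Finset.sum_congr rfl fun k _ => ?_
  by_cases h1 : a = y j
  · by_cases h2 : b = y k
    · subst h1; subst h2; simp [ind]
    · simp [h2]
  · simp [h1]

/-- Signed sum. -/
noncomputable def ssum {m : ℕ} (σ : Fin m → Bool) (A : Finset (Fin m × Bool)) : ℝ :=
  ∑ i, (ind (decide ((i, σ i) ∈ A)) - ind (decide ((i, !σ i) ∈ A)))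

lemma hoeff {m : ℕ} (A : Finset (Fin m × Bool)) (t : ℝ) :
    ∑ σ : Fin m → Bool, Real.exp (t * ssum σ A) ≤ 2 ^ m * Real.exp (m * (t ^ 2 / 2)) := by
  have h1 : ∀ σ : Fin m → Bool, Real.exp (t * ssum σ A) =
      ∏ i, Real.exp (t * (ind (decide ((i, σ i) ∈ A)) - ind (decide ((i, !σ i) ∈ A)))) := by
    intro σ
    rw [ssum, Finset.mul_sum, Real.exp_sum]
  simp_rw [h1]
  rw [← Fintype.prod_sum (fun (i : Fin m) (b : Bool) =>
    Real.exp (t * (ind (decide ((i, b) ∈ A)) - ind (decide ((i, !b) ∈ A)))))]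
  have h2 : (2 : ℝ) ^ m * Real.exp (m * (t ^ 2 / 2)) =
      ∏ _i : Fin m, (2 * Real.exp (t ^ 2 / 2)) := by
    simp [mul_pow, ← Real.exp_nat_mul]
  rw [h2]
  refine Finset.prod_le_prod (fun i _ => Finset.sum_nonneg fun b _ => (Real.exp_pos _).le) ?_
  intro i _
  have hc := Real.cosh_le_exp_half_sq t
  rw [Real.cosh_eq] at hc
  have h3 : 1 ≤ Real.exp (t ^ 2 / 2) := Real.one_le_exp (by positivity)
  simp only [Fintype.sum_bool, Bool.not_true, Bool.not_false]
  by_cases ha : (i, true) ∈ A <;> by_cases hb : (i, false) ∈ A <;> simp [ha, hb, ind] <;> linarith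

lemma exists_sign {m : ℕ} (F : Finset (Finset (Fin m × Bool))) (t : ℝ) (ht : 0 < t)
    (hF : 2 * (F.card : ℝ) * Real.exp (-(m * (t ^ 2 / 2))) < 1) :
    ∃ σ : Fin m → Bool, ∀ A ∈ F, |ssum σ A| ≤ t * m := by
  by_contra hcon
  push Not at hcon
  have key : ∀ σ : Fin m → Bool, Real.exp (t * (t * m)) ≤
      ∑ A ∈ F, (Real.exp (t * ssum σ A) + Real.exp ((-t) * ssum σ A)) := by
    intro σ
    obtain ⟨A, hA, hlt⟩ := hcon σ
    refine le_trans ?_ (Finset.single_le_sum (f := fun A =>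
      (Real.exp (t * ssum σ A) + Real.exp ((-t) * ssum σ A))) (fun B _ => by positivity) hA)
    have p1 := Real.exp_pos (t * ssum σ A)
    have p2 := Real.exp_pos ((-t) * ssum σ A)
    rcases lt_abs.1 hlt with h | h
    · have : Real.exp (t * (t * m)) ≤ Real.exp (t * ssum σ A) :=
        Real.exp_le_exp.2 (mul_le_mul_of_nonneg_left h.le ht.le)
      linarith
    · have : Real.exp (t * (t * m)) ≤ Real.exp ((-t) * ssum σ A) := by
        apply Real.exp_le_exp.2
        have := mul_le_mul_of_nonneg_left h.le ht.le
        linarith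
      linarith
  have h1 : (2 : ℝ) ^ m * Real.exp (t * (t * m)) ≤
      F.card * (2 * (2 ^ m * Real.exp (m * (t ^ 2 / 2)))) := by
    calc (2 : ℝ) ^ m * Real.exp (t * (t * m))
        = ∑ _σ : Fin m → Bool, Real.exp (t * (t * m)) := by simp
      _ ≤ ∑ σ : Fin m → Bool, ∑ A ∈ F,
          (Real.exp (t * ssum σ A) + Real.exp ((-t) * ssum σ A)) :=
          Finset.sum_le_sum fun σ _ => key σ
      _ = ∑ A ∈ F, ∑ σ : Fin m → Bool,
          (Real.exp (t * ssum σ A) + Real.exp ((-t) * ssum σ A)) := Finset.sum_comm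
      _ ≤ ∑ _A ∈ F, (2 * (2 ^ m * Real.exp (m * (t ^ 2 / 2)))) := by
          refine Finset.sum_le_sum fun A _ => ?_
          rw [Finset.sum_add_distrib]
          have a := hoeff A t
          have b := hoeff A (-t)
          rw [neg_sq] at b
          linarith
      _ = _ := by simp
  have h2 : Real.exp (t * (t * m)) =
      Real.exp (m * (t ^ 2 / 2)) * Real.exp (m * (t ^ 2 / 2)) := by
    rw [← Real.exp_add]; congr 1; ring
  rw [h2] at h1
  rw [Real.exp_neg] at hF
  have hp := Real.exp_pos (m * (t ^ 2 / 2))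
  have h2m : (0 : ℝ) < 2 ^ m := by positivity
  have h3 : 2 * (F.card : ℝ) < Real.exp (m * (t ^ 2 / 2)) := by
    rw [← div_eq_mul_inv, div_lt_one hp] at hF
    exact hF
  have h4 := mul_lt_mul_of_pos_right h3 (mul_pos h2m hp)
  nlinarith

open Classical in
lemma core (D : Set (ℕ → Bool)) (hD : vcDim D ≠ ⊤) (P : ℕ × Bool → ℕ)
    (hP : Function.Injective P) (t : ℝ) (ht : 0 < t) :
    ∃ m : ℕ, 0 < m ∧ ∃ σ : Fin m → Bool, ∀ d ∈ D,
      |∑ i : Fin m, (ind (d (P (i, σ i))) - ind (d (P (i, !σ i))))| ≤ t * m := by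
  obtain ⟨n, hn⟩ := ENat.ne_top_iff_exists.1 hD
  have hvc : ∀ T : Finset ℕ, Shatters D T → T.card ≤ n := by
    intro T hT
    have : (T.card : ℕ∞) ≤ vcDim D :=
      le_iSup₂ (f := fun (T : Finset ℕ) (_ : T ∈ {T : Finset ℕ | Shatters D T}) =>
        (T.card : ℕ∞)) T hT
    rw [← hn] at this
    exact_mod_cast this
  -- choose m
  have hlim : Filter.Tendsto (fun x : ℝ => x ^ n * Real.exp (-x)) Filter.atTop (nhds 0) :=
    Real.tendsto_pow_mul_exp_neg_atTop_nhds_zero n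
  have hc : 0 < t ^ 2 / 2 := by positivity
  have hlin : Filter.Tendsto (fun m : ℕ => (m : ℝ) * (t ^ 2 / 2)) Filter.atTop Filter.atTop :=
    tendsto_natCast_atTop_atTop.atTop_mul_const hc
  have hl2 := (hlim.comp hlin).const_mul (2 * ((n + 1 : ℝ) * (2 / (t ^ 2 / 2)) ^ n))
  rw [mul_zero] at hl2
  obtain ⟨m, hm1, hm0⟩ := ((hl2.eventually (gt_mem_nhds (zero_lt_one))).and
    (Filter.eventually_gt_atTop 0)).exists
  refine ⟨m, hm0, ?_⟩
  let Q : Fin m × Bool → ℕ := fun x => P (x.1, x.2)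
  have hQ : Function.Injective Q := by
    rintro ⟨a, b⟩ ⟨c, e⟩ h
    have := hP h
    simp only [Prod.mk.injEq] at this
    ext
    · exact this.1
    · simp [this.2]
  let F : Finset (Finset (Fin m × Bool)) :=
    Finset.univ.filter fun A => ∃ d ∈ D, ∀ x, x ∈ A ↔ d (Q x) = true
  have hsh : ∀ B, F.Shatters B → B.card ≤ n := by
    intro B hB
    rw [← Finset.card_image_of_injective B hQ]
    apply hvc
    intro f
    obtain ⟨u, hu, hBu⟩ := hB (Finset.filter_subset (fun x => f (Q x) = true) B)
    obtain ⟨d, hd, hdu⟩ := (Finset.mem_filter.1 hu).2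
    refine ⟨d, hd, ?_⟩
    intro x hx
    obtain ⟨z, hz, rfl⟩ := Finset.mem_image.1 hx
    have h1 : z ∈ B ∩ u ↔ z ∈ B.filter (fun x => f (Q x) = true) := by rw [hBu]
    simp only [Finset.mem_inter, Finset.mem_filter, hz, true_and, hdu] at h1
    exact Bool.eq_iff_iff.2 h1
  have hv : F.vcDim ≤ n := by
    refine Finset.sup_le fun B hB => hsh B (Finset.mem_shatterer.1 hB)
  have hcard : F.card ≤ (n + 1) * (2 * m) ^ n := by
    calc F.card ≤ F.shatterer.card := Finset.card_le_card_shatterer F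
      _ ≤ ∑ k ∈ Finset.Iic F.vcDim, (Fintype.card (Fin m × Bool)).choose k :=
        Finset.card_shatterer_le_sum_vcDim
      _ ≤ ∑ k ∈ Finset.Iic n, (Fintype.card (Fin m × Bool)).choose k :=
        Finset.sum_le_sum_of_subset (Finset.Iic_subset_Iic.2 hv)
      _ ≤ ∑ k ∈ Finset.Iic n, (2 * m) ^ n := by
        refine Finset.sum_le_sum fun k hk => ?_
        have : Fintype.card (Fin m × Bool) = 2 * m := by simp [mul_comm]
        rw [this]
        exact (Nat.choose_le_pow _ _).trans
          (Nat.pow_le_pow_right (by omega) (Finset.mem_Iic.1 hk))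
      _ = _ := by simp
  have hcardR : (F.card : ℝ) ≤ (n + 1) * (2 * m) ^ n := by exact_mod_cast hcard
  obtain ⟨σ, hσ⟩ := exists_sign F t ht (by
    refine lt_of_le_of_lt ?_ hm1
    simp only [Function.comp]
    have e : (2 * ((n + 1 : ℝ) * (2 / (t ^ 2 / 2)) ^ n)) *
        (((m : ℝ) * (t ^ 2 / 2)) ^ n * Real.exp (-((m : ℝ) * (t ^ 2 / 2)))) =
        2 * ((n + 1) * (2 * m) ^ n) * Real.exp (-((m : ℝ) * (t ^ 2 / 2))) := by
      have : (2 * m : ℝ) = (2 / (t ^ 2 / 2)) * ((m : ℝ) * (t ^ 2 / 2)) := by field_simp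
      rw [this, mul_pow (2 / (t ^ 2 / 2)) ((m : ℝ) * (t ^ 2 / 2))]
      generalize ((m : ℝ) * (t ^ 2 / 2)) ^ n = u
      generalize (2 / (t ^ 2 / 2)) ^ n = v
      ring
    rw [e]
    have := Real.exp_pos (-((m : ℝ) * (t ^ 2 / 2)))
    gcongr)
  refine ⟨σ, fun d hd => ?_⟩
  have := hσ (Finset.univ.filter fun x => d (Q x) = true) (by
    refine Finset.mem_filter.2 ⟨Finset.mem_univ _, d, hd, fun x => by simp⟩)
  simpa [ssum, Q] using this

/-- The abstract graph. -/
def GG : (ℕ × Bool) ⊕ Finset (ℕ × Bool) → (ℕ × Bool) ⊕ Finset (ℕ × Bool) → Bool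
  | .inl _, .inl _ => false
  | .inl a, .inr S => decide (a ∈ S)
  | .inr S, .inl a => decide (a ∈ S)
  | .inr _, .inr _ => true

lemma GG_symm (x y : (ℕ × Bool) ⊕ Finset (ℕ × Bool)) : GG x y = GG y x := by
  cases x <;> cases y <;> simp [GG]

/-- a single graph beats every finite-VC distinguishing class
(Theorem `main_expressive1`). -/
theorem stmt9 :
    ∃ g : ℕ → ℕ → Bool, (∀ x y, g x y = g y x) ∧
      ∀ D : Set (ℕ → Bool), vcDim D ≠ ⊤ →
        ∀ ε : ℝ, 0 < ε →
          ∃ p₁ p₂ : ℕ → ℝ, IsDist p₁ ∧ IsDist p₂ ∧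
            IPM1 D p₁ p₂ < ε ∧ |LP2 p₁ g - LP2 p₂ g| > 1 / 2 := by
  obtain ⟨e⟩ : Nonempty (ℕ ≃ (ℕ × Bool) ⊕ Finset (ℕ × Bool)) := nonempty_equiv_of_countable
  refine ⟨fun x y => GG (e x) (e y), ?_, ?_⟩
  · intro x y
    exact GG_symm _ _
  intro D hD ε hε
  obtain ⟨m, hm, σ, hσ⟩ := core D hD (fun x => e.symm (.inl x))
    (e.symm.injective.comp Sum.inl_injective) (ε / 2) (by positivity)
  have hmR : (0 : ℝ) < m := by exact_mod_cast hm
  obtain ⟨δ, hδ0, hδ1, hδ2⟩ : ∃ δ : ℝ, 0 < δ ∧ δ ≤ 1 / 4 ∧ δ ≤ ε / 16 :=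
    ⟨min (1 / 4) (ε / 16), by positivity, min_le_left _ _, min_le_right _ _⟩
  let S : Finset (ℕ × Bool) := Finset.univ.image fun i : Fin m => ((i : ℕ), σ i)
  have hS1 : ∀ i : Fin m, ((i : ℕ), σ i) ∈ S := fun i =>
    Finset.mem_image.2 ⟨i, Finset.mem_univ _, rfl⟩
  have hS2 : ∀ i : Fin m, ((i : ℕ), !σ i) ∉ S := by
    intro i hi
    obtain ⟨j, _, hj⟩ := Finset.mem_image.1 hi
    simp only [Prod.mk.injEq] at hj
    have : j = i := Fin.ext hj.1
    subst this
    simp at hj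
  let w (q : ℝ) : Option (Fin m) → ℝ := fun o => o.elim q fun _ => (1 - q) / m
  let y (τ : Fin m → Bool) : Option (Fin m) → ℕ :=
    fun o => o.elim (e.symm (.inr S)) fun i => e.symm (.inl (i, τ i))
  have hdist : ∀ (q : ℝ) τ, 0 ≤ q → q ≤ 1 → IsDist (fin_mass (w q) (y τ)) := by
    intro q τ h0 h1
    apply fin_mass_isDist
    · rintro (_ | i)
      · exact h0
      · exact div_nonneg (by linarith) hmR.le
    · simp only [Fintype.sum_option, w, Option.elim, Finset.sum_const, Finset.card_univ,
        Fintype.card_fin, nsmul_eq_mul]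
      field_simp
      ring
  refine ⟨fin_mass (w (1 / 2 + δ)) (y σ), fin_mass (w (1 / 2 - δ)) (y fun i => !σ i),
    hdist _ _ (by linarith) (by linarith), hdist _ _ (by linarith) (by linarith), ?_, ?_⟩
  · refine lt_of_le_of_lt ?_ (half_lt_self hε)
    refine Real.iSup_le (fun d => Real.iSup_le (fun hd => ?_) (by positivity)) (by positivity)
    have h := hσ d hd
    rw [fin_mass_LP1, fin_mass_LP1]
    simp only [Fintype.sum_option, w, y, Option.elim]
    rw [Finset.sum_sub_distrib] at h
    rw [← Finset.mul_sum, ← Finset.mul_sum]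
    have hb : ∀ f : Fin m → Bool, 0 ≤ ∑ i, ind (f i) ∧ ∑ i, ind (f i) ≤ m := by
      intro f
      refine ⟨Finset.sum_nonneg fun i _ => ind_nonneg _, ?_⟩
      refine (Finset.sum_le_sum fun i _ => ind_le_one (f i)).trans ?_
      simp
    obtain ⟨a0, a1⟩ := hb fun i => d (e.symm (.inl (↑i, σ i)))
    obtain ⟨b0, b1⟩ := hb fun i => d (e.symm (.inl (↑i, !σ i)))
    set X := ∑ i : Fin m, ind (d (e.symm (.inl (↑i, σ i))))
    set Y := ∑ i : Fin m, ind (d (e.symm (.inl (↑i, !σ i))))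
    have c0 := ind_nonneg (d (e.symm (.inr S)))
    have c1 := ind_le_one (d (e.symm (.inr S)))
    set c := ind (d (e.symm (.inr S)))
    obtain ⟨A, hA⟩ : ∃ A, A = X / m := ⟨_, rfl⟩
    obtain ⟨B, hB⟩ : ∃ B, B = Y / m := ⟨_, rfl⟩
    have eX : X = A * m := by rw [hA]; field_simp
    have eY : Y = B * m := by rw [hB]; field_simp
    have A0 : 0 ≤ A := by rw [hA]; positivity
    have B0 : 0 ≤ B := by rw [hB]; positivity
    have A1 : A ≤ 1 := by rw [hA, div_le_one hmR]; exact a1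
    have B1 : B ≤ 1 := by rw [hB, div_le_one hmR]; exact b1
    have hAB : |A - B| ≤ ε / 2 := by
      rw [eX, eY, ← sub_mul, abs_mul, abs_of_pos hmR] at h
      exact le_of_mul_le_mul_right h hmR
    have e1 : (1 / 2 + δ) * c + (1 - (1 / 2 + δ)) / m * X -
        ((1 / 2 - δ) * c + (1 - (1 / 2 - δ)) / m * Y) =
        2 * (δ * c) + (A - B) / 2 - δ * A - δ * B := by
      rw [eX, eY]; field_simp; ring
    rw [e1]
    have := abs_le.1 hAB
    have k1 : δ * c ≤ δ := by nlinarith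
    have k2 : δ * A ≤ δ := by nlinarith
    have k3 : δ * B ≤ δ := by nlinarith
    have k4 : 0 ≤ δ * c := by positivity
    have k5 : 0 ≤ δ * A := by positivity
    have k6 : 0 ≤ δ * B := by positivity
    rw [abs_le]
    constructor <;> linarith [this.1, this.2]
  · rw [fin_mass_LP2, fin_mass_LP2]
    simp only [Fintype.sum_option, w, y, Option.elim, Equiv.apply_symm_apply, GG, hS1, hS2,
      ind, decide_true, decide_false]
    simp only [if_true, Bool.false_eq_true, if_false, mul_zero, mul_one, Finset.sum_const_zero,
      Finset.sum_const, Finset.card_univ, Fintype.card_fin, nsmul_eq_mul, add_zero]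
    have e1 : (1 / 2 + δ) * (1 / 2 + δ) + m * ((1 / 2 + δ) * ((1 - (1 / 2 + δ)) / m)) +
        m * ((1 - (1 / 2 + δ)) / m * (1 / 2 + δ)) - (1 / 2 - δ) * (1 / 2 - δ) =
        1 / 2 + 2 * δ - 2 * δ ^ 2 := by
      field_simp; ring
    rw [e1]
    refine lt_of_lt_of_le ?_ (le_abs_self _)
    nlinarith

end GraphDisc
end

section
/- Let V = ℕ and k ≥ 2. There exists a single k-distinguisher g_k over V such that: for every (k−1)-distinguishing class G_{k−1} over V with finite graph VC dimension and every ε > 0, there exist probability distributions p₁, p₂ on V with IPM_{G_{k−1}}(p₁,p₂) < ε and |L_{p₁}(g_k) − L_{p₂}(g_k)| > 1/4. -/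
open scoped BigOperators

namespace GraphDisc

/-- uniform distribution on an indexed family -/
noncomputable def unif {V ι : Type*} [Fintype ι] (φ : ι → V) : V → ℝ :=
  open Classical in fun v => ∑ i, (1 / (Fintype.card ι : ℝ)) * (if φ i = v then 1 else 0)

lemma unif_isDist {V ι : Type*} [Fintype ι] [Nonempty ι] (φ : ι → V) : IsDist (unif φ) := by
  classical
  have hc : (0 : ℝ) < Fintype.card ι := by exact_mod_cast Fintype.card_pos
  refine ⟨fun v => ?_, ?_⟩
  · unfold unif
    positivity
  · have h : ∀ i ∈ (Finset.univ : Finset ι),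
        HasSum (fun v => (1 / (Fintype.card ι : ℝ)) * (if φ i = v then 1 else 0))
          (1 / (Fintype.card ι : ℝ)) := by
      intro i _
      have := hasSum_ite_eq (φ i) (1 : ℝ)
      have := this.mul_left (1 / (Fintype.card ι : ℝ))
      simpa [eq_comm] using this
    have := hasSum_sum h
    simp only [Finset.sum_const, Finset.card_univ, nsmul_eq_mul] at this
    rw [mul_one_div_cancel hc.ne'] at this
    convert this using 1
    ext v
    unfold unif
    congr! 

lemma LP_unif {V ι : Type*} [Fintype ι] {k : ℕ} (φ : ι → V) (g : (Fin k → V) → Bool) :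
    LP (unif φ) g = (1 / (Fintype.card ι : ℝ)) ^ k *
      ∑ t : Fin k → ι, (if g (φ ∘ t) then (1 : ℝ) else 0) := by
  classical
  have h1 : ∀ w : Fin k → V, (∏ i, unif φ (w i)) * (if g w then (1 : ℝ) else 0) =
      ∑ t : Fin k → ι, (if w = φ ∘ t then
        (1 / (Fintype.card ι : ℝ)) ^ k * (if g (φ ∘ t) then (1 : ℝ) else 0) else 0) := by
    intro w
    have : (∏ i, unif φ (w i)) = ∑ t : Fin k → ι, ∏ i, ((1 / (Fintype.card ι : ℝ)) *
        (if φ (t i) = w i then 1 else 0)) := by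
      unfold unif
      rw [Finset.prod_univ_sum, Fintype.piFinset_univ]
    rw [this, Finset.sum_mul]
    refine Finset.sum_congr rfl fun t _ => ?_
    rw [Finset.prod_mul_distrib, Finset.prod_const, Finset.card_univ, Fintype.card_fin]
    by_cases hw : w = φ ∘ t
    · subst hw
      simp
    · rw [if_neg hw]
      have : ∃ i, φ (t i) ≠ w i := by
        by_contra hcon
        push Not at hcon
        exact hw (funext fun i => (hcon i).symm)
      obtain ⟨i, hi⟩ := this
      have h0 : (∏ i, (if φ (t i) = w i then (1 : ℝ) else 0)) = 0 :=
        Finset.prod_eq_zero (Finset.mem_univ i) (if_neg hi)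
      rw [h0]; simp
  unfold LP
  simp_rw [h1]
  have h2 : ∀ t ∈ (Finset.univ : Finset (Fin k → ι)), HasSum (fun w : Fin k → V =>
      (if w = φ ∘ t then
        (1 / (Fintype.card ι : ℝ)) ^ k * (if g (φ ∘ t) then (1 : ℝ) else 0) else 0))
      ((1 / (Fintype.card ι : ℝ)) ^ k * (if g (φ ∘ t) then (1 : ℝ) else 0)) :=
    fun t _ => hasSum_ite_eq _ _
  rw [(hasSum_sum h2).tsum_eq, Finset.mul_sum]

lemma hybrid {V ι : Type*} [Fintype ι] [hι : Nonempty ι] (φ ψ : ι → V) (R : Set V) (hφ : ∀ a, φ a ∈ R)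
    (hψ : ∀ a, ψ a ∈ R) (c : ℝ) (m : ℕ) (h : (Fin m → V) → ℝ)
    (H : ∀ (i : Fin m) (w : Fin m → V), (∀ l, w l ∈ R) →
      |∑ a, (h (Function.update w i (φ a)) - h (Function.update w i (ψ a)))| ≤ c) :
    |∑ t : Fin m → ι, (h (φ ∘ t) - h (ψ ∘ t))| ≤
      m * c * (Fintype.card ι : ℝ) ^ (m - 1) := by
  classical
  induction m with
  | zero =>
    have : ∀ t : Fin 0 → ι, h (φ ∘ t) - h (ψ ∘ t) = 0 := by
      intro t
      rw [Subsingleton.elim (φ ∘ t) (ψ ∘ t)]; simp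
    simp [this]
  | succ m ih =>
    have e : ∀ f : (Fin (m + 1) → ι) → ℝ, ∑ t, f t = ∑ a, ∑ t : Fin m → ι, f (Fin.cons a t) := by
      intro f
      rw [← (Fin.consEquiv (fun _ => ι)).sum_comp, Fintype.sum_prod_type]
      rfl
    have cc : ∀ (χ : ι → V) (a : ι) (t : Fin m → ι),
        χ ∘ (Fin.cons a t : Fin (m + 1) → ι) = (Fin.cons (χ a) (χ ∘ t) : Fin (m + 1) → V) := by
      intro χ a t
      ext l
      refine Fin.cases ?_ (fun l => ?_) l <;> simp
    rw [e]
    simp_rw [cc]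
    have split : ∑ a, ∑ t : Fin m → ι, (h (Fin.cons (φ a) (φ ∘ t)) - h (Fin.cons (ψ a) (ψ ∘ t)))
        = ∑ a, (∑ t : Fin m → ι, (h (Fin.cons (φ a) (φ ∘ t)) - h (Fin.cons (φ a) (ψ ∘ t))))
        + ∑ t : Fin m → ι, ∑ a, (h (Fin.cons (φ a) (ψ ∘ t)) - h (Fin.cons (ψ a) (ψ ∘ t))) := by
      rw [Finset.sum_comm (s := (Finset.univ : Finset (Fin m → ι))), ← Finset.sum_add_distrib]
      refine Finset.sum_congr rfl fun a _ => ?_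
      rw [← Finset.sum_add_distrib]
      refine Finset.sum_congr rfl fun t _ => ?_
      ring
    rw [split]
    have b1 : ∀ a, |∑ t : Fin m → ι, (h (Fin.cons (φ a) (φ ∘ t)) - h (Fin.cons (φ a) (ψ ∘ t)))|
        ≤ m * c * (Fintype.card ι : ℝ) ^ (m - 1) := by
      intro a
      refine ih (fun w => h (Fin.cons (φ a) w)) fun i w hw => ?_
      have := H i.succ (Fin.cons (φ a) w) (by
        intro l
        refine Fin.cases ?_ (fun l => ?_) l
        · simpa using hφ a
        · simpa using hw l)
      simpa only [Fin.cons_update] using this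
    have b2 : ∀ t : Fin m → ι, |∑ a, (h (Fin.cons (φ a) (ψ ∘ t)) - h (Fin.cons (ψ a) (ψ ∘ t)))|
        ≤ c := by
      intro t
      have a0 := hι.some
      have := H 0 (Fin.cons (φ a0) (ψ ∘ t)) (by
        intro l
        refine Fin.cases ?_ (fun l => ?_) l
        · simpa using hφ a0
        · simpa using hψ (t l))
      simpa only [Fin.update_cons_zero] using this
    have k1 := (Finset.abs_sum_le_sum_abs
      (fun a => ∑ t : Fin m → ι, (h (Fin.cons (φ a) (φ ∘ t)) - h (Fin.cons (φ a) (ψ ∘ t))))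
      Finset.univ).trans (Finset.sum_le_sum fun a _ => b1 a)
    have k2 := (Finset.abs_sum_le_sum_abs
      (fun t : Fin m → ι => ∑ a, (h (Fin.cons (φ a) (ψ ∘ t)) - h (Fin.cons (ψ a) (ψ ∘ t))))
      Finset.univ).trans (Finset.sum_le_sum fun t _ => b2 t)
    simp only [Finset.sum_const, Finset.card_univ, nsmul_eq_mul, Fintype.card_fun,
      Fintype.card_fin] at k1 k2
    refine (abs_add_le _ _).trans ((add_le_add k1 k2).trans (le_of_eq ?_))
    rcases m with _ | m
    · simp
    · push_cast
      ring

def VCle {X : Type*} (D : Set (X → Bool)) (d : ℕ) : Prop :=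
  ∀ T : Finset X, Shatters D T → T.card ≤ d

lemma vcle_of_vcDim {X : Type*} (D : Set (X → Bool)) (d : ℕ) (h : vcDim D ≤ d) : VCle D d := by
  intro T hT
  have : (T.card : ℕ∞) ≤ vcDim D := by
    unfold vcDim
    exact le_iSup₂_of_le T hT le_rfl
  exact_mod_cast this.trans h

lemma vcle_pullback {X Y : Type*} (D : Set (X → Bool)) (d : ℕ) (h : VCle D d) (e : Y → X)
    (he : Function.Injective e) : VCle ((fun c => c ∘ e) '' D) d := by
  classical
  intro T hT
  have : Shatters D (T.map ⟨e, he⟩) := by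
    intro f
    obtain ⟨_, ⟨c, hc, rfl⟩, hd⟩ := hT (f ∘ e)
    refine ⟨c, hc, ?_⟩
    intro x hx
    rw [Finset.mem_map] at hx
    obtain ⟨y, hy, rfl⟩ := hx
    exact hd y hy
  simpa using h _ this

lemma slice_vc {V : Type*} (d m : ℕ) (G : Set ((Fin (m + 1) → V) → Bool))
    (h : gvcDim (m + 1) G ≤ d) (u : Fin m → V) :
    VCle ((fun g => fun x => g (Fin.snoc (α := fun _ => V) u x)) '' G) d := by
  induction m with
  | zero =>
    have h1 : VCle G d := vcle_of_vcDim _ _ h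
    have := vcle_pullback G d h1 (fun x : V => fun _ : Fin 1 => x)
      (fun a b hab => congrFun hab 0)
    convert this using 3 with g hg x
    show _ = g (fun _ => x)
    congr 1
  | succ m ih =>
    have h1 : gvcDim (m + 1) (proj (u 0) '' G) ≤ d := by
      refine le_trans ?_ h
      show _ ≤ ⨆ v : V, gvcDim (m + 1) (proj v '' G)
      exact le_iSup (fun v : V => gvcDim (m + 1) (proj v '' G)) (u 0)
    have := ih _ h1 (Fin.tail u)
    rw [Set.image_image] at this
    convert this using 3 with g x
    unfold proj
    rw [Fin.cons_snoc_eq_snoc_cons, Fin.cons_self_tail]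

lemma tail_one (n : ℕ) (x : Fin n → ℝ) (hx : ∀ j, |x j| ≤ 1) (ε : ℝ) (hε : 0 < ε) :
    (((Finset.univ : Finset (Fin n → Bool)).filter
      (fun s => ε * n < ∑ j, (if s j then (1 : ℝ) else -1) * x j)).card : ℝ)
      ≤ 2 ^ n * Real.exp (-(ε ^ 2 * n / 2)) := by
  classical
  have h1 : ∑ s : Fin n → Bool, Real.exp (ε * ∑ j, (if s j then (1 : ℝ) else -1) * x j)
      = ∏ j, ∑ b : Bool, Real.exp (ε * ((if b then (1 : ℝ) else -1) * x j)) := by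
    rw [Finset.prod_univ_sum, Fintype.piFinset_univ]
    refine Finset.sum_congr rfl fun s _ => ?_
    rw [Finset.mul_sum, Real.exp_sum]
  have h2 : ∏ j, ∑ b : Bool, Real.exp (ε * ((if b then (1 : ℝ) else -1) * x j))
      ≤ ∏ j : Fin n, (2 * Real.exp (ε ^ 2 / 2)) := by
    refine Finset.prod_le_prod (fun j _ => by positivity) fun j _ => ?_
    have := Real.cosh_le_exp_half_sq (ε * x j)
    rw [Real.cosh_eq] at this
    have h3 : Real.exp ((ε * x j) ^ 2 / 2) ≤ Real.exp (ε ^ 2 / 2) := by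
      apply Real.exp_le_exp.2
      have : x j ^ 2 ≤ 1 := by
        rw [← sq_abs]; exact pow_le_one₀ (abs_nonneg _) (hx j)
      rw [mul_pow]
      nlinarith [sq_nonneg ε]
    simp only [Fintype.sum_bool, if_true, Bool.false_eq_true, if_false, one_mul, neg_mul, mul_neg]
    linarith
  have h4 : (((Finset.univ : Finset (Fin n → Bool)).filter
      (fun s => ε * n < ∑ j, (if s j then (1 : ℝ) else -1) * x j)).card : ℝ)
      * Real.exp (ε * (ε * n)) ≤
      ∑ s : Fin n → Bool, Real.exp (ε * ∑ j, (if s j then (1 : ℝ) else -1) * x j) := by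
    rw [← nsmul_eq_mul, ← Finset.sum_const]
    refine (Finset.sum_le_sum fun s hs => ?_).trans
      (Finset.sum_le_sum_of_subset_of_nonneg (Finset.filter_subset _ _)
        fun s _ _ => (Real.exp_pos _).le)
    rw [Finset.mem_filter] at hs
    exact Real.exp_le_exp.2 (mul_le_mul_of_nonneg_left hs.2.le hε.le)
  have h5 := h4.trans (h1.le.trans h2)
  rw [Finset.prod_const, Finset.card_univ, Fintype.card_fin, mul_pow, ← Real.exp_nat_mul] at h5
  rw [← le_div_iff₀ (Real.exp_pos _), mul_div_assoc, ← Real.exp_sub] at h5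
  refine h5.trans (le_of_eq ?_)
  congr 2
  ring

lemma sauer {X : Type*} [Fintype X] (D : Set (X → Bool)) (d : ℕ) (h : VCle D d)
    (hX : 1 ≤ Fintype.card X) :
    D.ncard ≤ (d + 1) * (Fintype.card X) ^ d := by
  classical
  let F : (X → Bool) → Finset X := fun c => Finset.univ.filter (fun x => c x = true)
  have hF : Function.Injective F := by
    intro a b hab
    ext x
    have : x ∈ F a ↔ x ∈ F b := by rw [hab]
    simp only [F, Finset.mem_filter, Finset.mem_univ, true_and] at this
    cases ha : a x <;> cases hb : b x <;> simp_all
  let A : Finset (Finset X) := D.toFinset.image F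
  have hA : A.vcDim ≤ d := by
    unfold Finset.vcDim
    refine Finset.sup_le fun T hT => ?_
    rw [Finset.mem_shatterer] at hT
    refine h T ?_
    intro f
    obtain ⟨u, hu, hTu⟩ := hT (t := T.filter (fun x => f x = true)) (Finset.filter_subset _ _)
    rw [Finset.mem_image] at hu
    obtain ⟨c, hc, rfl⟩ := hu
    refine ⟨c, by simpa using hc, fun x hx => ?_⟩
    have : x ∈ T ∩ F c ↔ x ∈ T.filter (fun x => f x = true) := by rw [hTu]
    simp only [F, Finset.mem_inter, Finset.mem_filter, Finset.mem_univ, true_and, hx] at this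
    cases ha : c x <;> cases hb : f x <;> simp_all
  have hcard : A.card = D.ncard := by
    rw [Finset.card_image_of_injective _ hF, Set.ncard_eq_toFinset_card']
  rw [← hcard]
  refine (Finset.card_le_card_shatterer A).trans (Finset.card_shatterer_le_sum_vcDim.trans ?_)
  calc ∑ k ∈ Finset.Iic A.vcDim, (Fintype.card X).choose k
      ≤ ∑ k ∈ Finset.Iic A.vcDim, (Fintype.card X) ^ d := by
        refine Finset.sum_le_sum fun k hk => ?_
        rw [Finset.mem_Iic] at hk
        exact (Nat.choose_le_pow _ _).trans (Nat.pow_le_pow_right hX (hk.trans hA))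
    _ ≤ _ := by
        rw [Finset.sum_const, Nat.card_Iic, smul_eq_mul]
        exact Nat.mul_le_mul_right _ (by omega)

open Classical in
noncomputable def badSet {n : ℕ} (D : Set (Fin n × Bool → Bool)) (ε : ℝ) : Finset (Fin n → Bool) :=
  Finset.univ.filter fun s => ∃ c ∈ D, ε * n < |∑ j, ((if c (j, s j) then (1 : ℝ) else 0) -
    (if c (j, !s j) then (1 : ℝ) else 0))|

lemma badSet_card {n : ℕ} (hn : 1 ≤ n) (D : Set (Fin n × Bool → Bool)) (d : ℕ) (h : VCle D d)
    (ε : ℝ) (hε : 0 < ε) :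
    ((badSet D ε).card : ℝ) ≤
      ((d + 1) * (2 * n) ^ d) * (2 * (2 ^ n * Real.exp (-(ε ^ 2 * n / 2)))) := by
  classical
  let y : (Fin n × Bool → Bool) → Fin n → ℝ := fun c j =>
    (if c (j, true) then (1 : ℝ) else 0) - (if c (j, false) then (1 : ℝ) else 0)
  have hy : ∀ c j, |y c j| ≤ 1 := by
    intro c j
    simp only [y]
    split_ifs <;> simp
  let E : (Fin n → ℝ) → Finset (Fin n → Bool) := fun x => Finset.univ.filter
    (fun s => ε * n < ∑ j, (if s j then (1 : ℝ) else -1) * x j)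
  have hsub : badSet D ε ⊆ D.toFinset.biUnion (fun c => E (y c) ∪ E (fun j => - y c j)) := by
    intro s hs
    unfold badSet at hs
    rw [Finset.mem_filter] at hs
    obtain ⟨-, c, hc, hlt⟩ := hs
    rw [Finset.mem_biUnion]
    refine ⟨c, by simpa using hc, ?_⟩
    have e1 : ∑ j, ((if c (j, s j) then (1 : ℝ) else 0) -
        (if c (j, !s j) then (1 : ℝ) else 0)) = ∑ j, (if s j then (1 : ℝ) else -1) * y c j := by
      refine Finset.sum_congr rfl fun j _ => ?_
      simp only [y]
      cases s j <;> simp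
    rw [e1, lt_abs] at hlt
    simp only [E, Finset.mem_union, Finset.mem_filter, Finset.mem_univ, true_and, mul_neg,
      Finset.sum_neg_distrib]
    exact hlt
  have hE : ∀ c ∈ D.toFinset, ((E (y c) ∪ E (fun j => - y c j)).card : ℝ) ≤
      2 * (2 ^ n * Real.exp (-(ε ^ 2 * n / 2))) := by
    intro c _
    have h1 := tail_one n (y c) (hy c) ε hε
    have h2 := tail_one n (fun j => - y c j) (fun j => by rw [abs_neg]; exact hy c j) ε hε
    have h3 : ((E (y c) ∪ E (fun j => - y c j)).card : ℝ) ≤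
      (E (y c)).card + (E (fun j => - y c j)).card := by
      exact_mod_cast Finset.card_union_le _ _
    have h1' : ((E (y c)).card : ℝ) ≤ _ := h1
    have h2' : ((E (fun j => - y c j)).card : ℝ) ≤ _ := h2
    linarith
  have hs := sauer D d h (by simp; omega)
  rw [Set.ncard_eq_toFinset_card'] at hs
  have hs' : (D.toFinset.card : ℝ) ≤ (d + 1) * (2 * n) ^ d := by
    have : (Fintype.card (Fin n × Bool)) = 2 * n := by simp [mul_comm]
    rw [this] at hs
    exact_mod_cast hs
  calc ((badSet D ε).card : ℝ) ≤ ((D.toFinset.biUnion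
        (fun c => E (y c) ∪ E (fun j => - y c j))).card : ℝ) := by
        exact_mod_cast Finset.card_le_card hsub
    _ ≤ ((∑ c ∈ D.toFinset, (E (y c) ∪ E (fun j => - y c j)).card : ℕ) : ℝ) := by
        exact_mod_cast Finset.card_biUnion_le
    _ ≤ ∑ c ∈ D.toFinset, 2 * (2 ^ n * Real.exp (-(ε ^ 2 * n / 2))) := by
        push_cast
        exact Finset.sum_le_sum hE
    _ = D.toFinset.card * (2 * (2 ^ n * Real.exp (-(ε ^ 2 * n / 2)))) := by
        rw [Finset.sum_const, nsmul_eq_mul]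
    _ ≤ _ := by gcongr

lemma exists_n (d m r : ℕ) (ε : ℝ) (hε : 0 < ε) : ∃ n : ℕ, 1 ≤ n ∧
    ∀ D : Set (Fin n × Bool → Bool), VCle D d →
      (badSet D ε).card * (2 * r * (2 * r * n) ^ m) ≤ 2 ^ n := by
  have ht := Real.tendsto_pow_mul_exp_neg_atTop_nhds_zero (d + m)
  have hc : (0 : ℝ) < ε ^ 2 / 2 := by positivity
  have ht2 : Filter.Tendsto (fun n : ℕ => (ε ^ 2 / 2) * (n : ℝ)) Filter.atTop Filter.atTop :=
    Filter.Tendsto.const_mul_atTop hc tendsto_natCast_atTop_atTop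
  have ht3 := (ht.comp ht2).const_mul
    (((d + 1) * 2 ^ d * 2 * (2 * r * (2 * r) ^ m) : ℝ) / (ε ^ 2 / 2) ^ (d + m))
  rw [mul_zero] at ht3
  obtain ⟨n, hn1, hn2⟩ := ((ht3.eventually (gt_mem_nhds (zero_lt_one' ℝ))).and
    (Filter.eventually_ge_atTop 1)).exists
  refine ⟨n, hn2, fun D hD => ?_⟩
  have hb := badSet_card hn2 D d hD ε hε
  simp only [Function.comp] at hn1
  have : ((badSet D ε).card : ℝ) * (2 * r * (2 * r * n) ^ m) ≤ 2 ^ n := by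
    calc ((badSet D ε).card : ℝ) * (2 * r * (2 * r * n) ^ m)
        ≤ (((d + 1) * (2 * n) ^ d) * (2 * (2 ^ n * Real.exp (-(ε ^ 2 * n / 2))))) *
          (2 * r * (2 * r * n) ^ m) := by gcongr
      _ = 2 ^ n * (((d + 1) * 2 ^ d * 2 * (2 * r * (2 * r) ^ m) : ℝ) / (ε ^ 2 / 2) ^ (d + m) *
          ((ε ^ 2 / 2 * n) ^ (d + m) * Real.exp (-(ε ^ 2 / 2 * n)))) := by
          have e1 : -(ε ^ 2 * n / 2) = -(ε ^ 2 / 2 * n) := by ring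
          rw [e1, mul_pow (ε ^ 2 / 2) (n : ℝ)]
          have : (ε ^ 2 / 2) ^ (d + m) ≠ 0 := by positivity
          generalize Real.exp (-(ε ^ 2 / 2 * n)) = E
          generalize (ε ^ 2 / 2) ^ (d + m) = K at *
          field_simp
          simp only [mul_pow, pow_add]
          ring
      _ ≤ 2 ^ n * 1 := by gcongr
      _ = 2 ^ n := mul_one _
  exact_mod_cast this

lemma counting {C S 𝓑 : Type*} [Fintype C] [Fintype S] [Fintype 𝓑] [Nonempty S]
    (bad : 𝓑 → C → Finset S) (hcard : Fintype.card 𝓑 < 2 ^ Fintype.card C) :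
    ∃ σ : C → S, ∀ β, (∀ c, 2 * (bad β c).card ≤ Fintype.card S) → ∃ c, σ c ∉ bad β c := by
  classical
  by_contra hcon
  push Not at hcon
  let good : Finset 𝓑 := Finset.univ.filter
    (fun β => ∀ c, 2 * (bad β c).card ≤ Fintype.card S)
  have hcov : (Finset.univ : Finset (C → S)) ⊆
      good.biUnion (fun β => Fintype.piFinset (bad β)) := by
    intro σ _
    obtain ⟨β, h1, h2⟩ := hcon σ
    rw [Finset.mem_biUnion]
    exact ⟨β, by simpa [good] using h1, by simpa [Fintype.mem_piFinset] using h2⟩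
  have h1 := (Finset.card_le_card hcov).trans Finset.card_biUnion_le
  have h2 : ∀ β ∈ good, 2 ^ Fintype.card C * (Fintype.piFinset (bad β)).card
      ≤ (Fintype.card S) ^ Fintype.card C := by
    intro β hβ
    have hb : ∀ c, 2 * (bad β c).card ≤ Fintype.card S := by simpa [good] using hβ
    rw [Fintype.card_piFinset]
    calc 2 ^ Fintype.card C * ∏ c, (bad β c).card = ∏ c, (2 * (bad β c).card) := by
          rw [Finset.prod_mul_distrib]; simp
      _ ≤ ∏ c : C, Fintype.card S := Finset.prod_le_prod' fun c _ => hb c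
      _ = _ := by simp
  have h3 : 2 ^ Fintype.card C * (Fintype.card S) ^ Fintype.card C
      ≤ Fintype.card 𝓑 * (Fintype.card S) ^ Fintype.card C := by
    rw [Finset.card_univ, Fintype.card_fun] at h1
    calc _ ≤ 2 ^ Fintype.card C * ∑ β ∈ good, (Fintype.piFinset (bad β)).card :=
          Nat.mul_le_mul_left _ h1
      _ = ∑ β ∈ good, 2 ^ Fintype.card C * (Fintype.piFinset (bad β)).card := Finset.mul_sum _ _ _
      _ ≤ ∑ β ∈ good, (Fintype.card S) ^ Fintype.card C := Finset.sum_le_sum h2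
      _ = good.card * (Fintype.card S) ^ Fintype.card C := by simp
      _ ≤ _ := Nat.mul_le_mul_right _ (Finset.card_le_univ _)
  have h4 : 0 < (Fintype.card S) ^ Fintype.card C := pow_pos Fintype.card_pos _
  exact absurd (Nat.le_of_mul_le_mul_right h3 h4) (not_le.2 hcard)

def Sep {C : Type*} {k r P : ℕ} (val : C → Fin r → Fin P) : Prop :=
  ∀ c c' (i : Fin k → Fin r), Function.Injective i →
    (∀ t, val c (i t) = val c' (i t)) → c = c'

lemma design (k r : ℕ) : ∃ K : ℕ, ∀ Q : ℕ, 0 < Q →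
    ∃ val : (Fin k → Fin Q) → Fin r → Fin (K * Q), Sep (k := k) val := by
  refine ⟨k * r ^ k + 1, fun Q hQ => ?_⟩
  have hb : ∀ (c : Fin k → Fin Q) (i : Fin r),
      ∑ t : Fin k, (c t : ℕ) * (i : ℕ) ^ (t : ℕ) < (k * r ^ k + 1) * Q := by
    intro c i
    have : ∑ t : Fin k, (c t : ℕ) * (i : ℕ) ^ (t : ℕ) ≤ ∑ t : Fin k, Q * r ^ k := by
      refine Finset.sum_le_sum fun t _ => Nat.mul_le_mul (c t).2.le ?_
      exact (Nat.pow_le_pow_left i.2.le _).trans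
        (Nat.pow_le_pow_right (by have := i.2; omega) t.2.le)
    rw [Finset.sum_const, Finset.card_univ, Fintype.card_fin, smul_eq_mul] at this
    nlinarith
  refine ⟨fun c i => ⟨_, hb c i⟩, ?_⟩
  intro c c' i hi h
  have h1 := Matrix.eq_zero_of_forall_index_sum_mul_pow_eq_zero (R := ℤ)
    (f := fun t : Fin k => ((i t : ℕ) : ℤ)) (v := fun t => ((c t : ℕ) : ℤ) - ((c' t : ℕ) : ℤ))
    (by
      intro a b hab
      apply hi
      ext
      have hab' : ((i a : ℕ) : ℤ) = ((i b : ℕ) : ℤ) := hab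
      exact_mod_cast hab')
    (by
      intro t
      have := h t
      simp only [Fin.mk.injEq] at this
      simp_rw [sub_mul]
      rw [Finset.sum_sub_distrib, sub_eq_zero]
      exact_mod_cast this)
  ext t
  have := congrFun h1 t
  simp only [Pi.zero_apply] at this
  omega

lemma cyl_card {n r : ℕ} (i : Fin r) (T : Finset (Fin n → Bool)) :
    ((Finset.univ : Finset (Fin r → Fin n → Bool)).filter (fun s => s i ∈ T)).card * 2 ^ n
      = T.card * Fintype.card (Fin r → Fin n → Bool) := by
  classical
  have : (Finset.univ : Finset (Fin r → Fin n → Bool)).filter (fun s => s i ∈ T)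
      = Fintype.piFinset (fun i' => if i' = i then T else Finset.univ) := by
    ext s
    simp only [Finset.mem_filter, Finset.mem_univ, true_and, Fintype.mem_piFinset]
    constructor
    · intro h i'
      split_ifs with h'
      · rw [h']; exact h
      · simp
    · intro h
      simpa using h i
  rw [this, Fintype.card_piFinset, Fintype.card_fun,
    ← Finset.mul_prod_erase Finset.univ _ (Finset.mem_univ i), if_pos rfl,
    Finset.prod_congr rfl (g := fun _ => 2 ^ n)]
  · rw [Finset.prod_const, Finset.card_erase_of_mem (Finset.mem_univ i), Finset.card_univ,
      mul_assoc, ← pow_succ, Fintype.card_fin]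
    have := i.2
    rw [Nat.sub_add_cancel (by omega)]
    simp
  · intro i' hi'
    rw [if_neg (Finset.ne_of_mem_erase hi')]
    simp

set_option synthInstance.maxHeartbeats 400000 in
set_option synthInstance.maxSize 1000 in
lemma instance_exists (m r n : ℕ) : ∃ (Q P : ℕ)
    (val : (Fin (m + 2) → Fin Q) → Fin r → Fin P)
    (σ : (Fin (m + 2) → Fin Q) → Fin r → Fin n → Bool),
    Sep (k := m + 2) val ∧
    ∀ B : (Fin m → Fin r × Fin P × Fin n × Bool) → Fin r → Fin P → Finset (Fin n → Bool),
      (∀ u i a, (B u i a).card * (2 * r * (2 * r * n) ^ m) ≤ 2 ^ n) →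
      ∃ c, ∀ (u : Fin m → Fin r × Fin n × Bool) (i : Fin r),
        σ c i ∉ B (fun l => ((u l).1, val c (u l).1, (u l).2)) i (val c i) := by
  classical
  obtain ⟨K, hK⟩ := design (m + 2) r
  let Q : ℕ := 2 ^ n * ((r * (K * (n * 2))) ^ m * (r * K)) + 1
  obtain ⟨val, hval⟩ := hK Q (by omega)
  let bad : ((Fin m → Fin r × Fin (K * Q) × Fin n × Bool) → Fin r → Fin (K * Q) →
      Finset (Fin n → Bool)) → (Fin (m + 2) → Fin Q) → Finset (Fin r → Fin n → Bool) :=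
    fun B c => (Finset.univ : Finset ((Fin m → Fin r × Fin n × Bool) × Fin r)).biUnion fun ui =>
      Finset.univ.filter (fun s => s ui.2 ∈
        B (fun l => ((ui.1 l).1, val c (ui.1 l).1, (ui.1 l).2)) ui.2 (val c ui.2))
  obtain ⟨σ, hσ⟩ := counting bad (by
    simp only [Fintype.card_fun, Fintype.card_prod, Fintype.card_fin, Fintype.card_bool,
      Fintype.card_finset, ← pow_mul]
    apply Nat.pow_lt_pow_right (by norm_num)
    have e : 2 ^ n * (K * Q) * r * (r * (K * Q * (n * 2))) ^ m
      = (2 ^ n * ((r * (K * (n * 2))) ^ m * (r * K))) * Q ^ (m + 1) := by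
      simp only [mul_pow]; ring
    have h2 : (2 ^ n * ((r * (K * (n * 2))) ^ m * (r * K))) * Q ^ (m + 1) < Q ^ (m + 2) := by
      rw [pow_succ' Q (m + 1)]
      apply Nat.mul_lt_mul_of_pos_right
      · exact Nat.lt_succ_self _
      · exact pow_pos (Nat.succ_pos _) _
    rw [e]; exact h2)
  refine ⟨Q, K * Q, val, σ, hval, fun B hB => ?_⟩
  obtain ⟨c, hc⟩ := hσ B (by
    intro c
    have h1 : (bad B c).card ≤ ∑ ui : (Fin m → Fin r × Fin n × Bool) × Fin r,
      (Finset.univ.filter (fun s : Fin r → Fin n → Bool => s ui.2 ∈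
        B (fun l => ((ui.1 l).1, val c (ui.1 l).1, (ui.1 l).2)) ui.2 (val c ui.2))).card :=
      Finset.card_biUnion_le
    set S := Fintype.card (Fin r → Fin n → Bool) with hS
    by_contra hlt
    push Not at hlt
    have hW : 0 < r * (2 * r * n) ^ m := by
      by_contra h0
      have h0 : r * (2 * r * n) ^ m = 0 := by omega
      have : Fintype.card ((Fin m → Fin r × Fin n × Bool) × Fin r) = 0 := by
        simp only [Fintype.card_fun, Fintype.card_prod, Fintype.card_fin, Fintype.card_bool]
        rw [← h0]; ring
      rw [Fintype.card_eq_zero_iff] at this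
      rw [Finset.univ_eq_empty, Finset.sum_empty] at h1
      omega
    have h2 : ∀ ui : (Fin m → Fin r × Fin n × Bool) × Fin r,
      (Finset.univ.filter (fun s : Fin r → Fin n → Bool => s ui.2 ∈
        B (fun l => ((ui.1 l).1, val c (ui.1 l).1, (ui.1 l).2)) ui.2 (val c ui.2))).card
        * (2 * r * (2 * r * n) ^ m) ≤ S := by
      intro ui
      have a := cyl_card ui.2 (B (fun l => ((ui.1 l).1, val c (ui.1 l).1, (ui.1 l).2)) ui.2
        (val c ui.2))
      have b := hB (fun l => ((ui.1 l).1, val c (ui.1 l).1, (ui.1 l).2)) ui.2 (val c ui.2)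
      rw [← hS] at a
      refine Nat.le_of_mul_le_mul_right ?_ (pow_pos (show 0 < 2 by norm_num) n)
      rw [mul_right_comm, a, mul_right_comm, mul_comm S]
      exact Nat.mul_le_mul_right _ b
    have h3 : (bad B c).card * (2 * r * (2 * r * n) ^ m) ≤ (r * (2 * r * n) ^ m) * S := by
      calc _ ≤ _ := Nat.mul_le_mul_right _ h1
        _ = _ := Finset.sum_mul _ _ _
        _ ≤ ∑ ui : (Fin m → Fin r × Fin n × Bool) × Fin r, S := Finset.sum_le_sum fun ui _ => h2 ui
        _ = _ := by
          simp only [Finset.sum_const, Finset.card_univ, Fintype.card_fun, Fintype.card_prod,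
            Fintype.card_fin, Fintype.card_bool, smul_eq_mul]
          ring
    nlinarith)
  refine ⟨c, fun u i hmem => hc ?_⟩
  simp only [bad, Finset.mem_biUnion, Finset.mem_univ, true_and, Finset.mem_filter]
  exact ⟨(u, i), hmem⟩

def enc (n i a j : ℕ) (b : Bool) : ℕ := Encodable.encode (n, i, a, j, b)

lemma enc_inj {n i a j n' i' a' j' : ℕ} {b b' : Bool} (h : enc n i a j b = enc n' i' a' j' b') :
    n = n' ∧ i = i' ∧ a = a' ∧ j = j' ∧ b = b' := by
  have := Encodable.encode_injective h
  simpa using this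

lemma inj_count (k r n : ℕ) (hk : 1 ≤ k) (hr : r = 2 * k ^ 2) :
    (1 / 2 : ℝ) * ((r * n : ℕ) : ℝ) ^ k ≤
      ((Finset.univ : Finset (Fin k → Fin r × Fin n)).filter
        (fun t => Function.Injective (fun l => (t l).1))).card := by
  classical
  have h1 : Fintype.card ((Fin k ↪ Fin r) × (Fin k → Fin n)) ≤
      ((Finset.univ : Finset (Fin k → Fin r × Fin n)).filter
        (fun t => Function.Injective (fun l => (t l).1))).card := by
    rw [← Finset.card_univ]
    refine Finset.card_le_card_of_injOn (fun x l => (x.1 l, x.2 l)) ?_ ?_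
    · intro x _
      simp only [Finset.coe_filter, Finset.mem_univ, true_and, Set.mem_ofPred_eq]
      exact x.1.injective
    · intro x _ y _ hxy
      ext l
      · have := congrFun hxy l
        simp only [Prod.mk.injEq] at this
        rw [this.1]
      · have := congrFun hxy l
        simp only [Prod.mk.injEq] at this
        rw [this.2]
  rw [Fintype.card_prod, Fintype.card_embedding_eq, Fintype.card_fun] at h1
  simp only [Fintype.card_fin] at h1
  have h2 := Nat.pow_sub_le_descFactorial r k
  have hkr : k ≤ r + 1 := by rw [hr]; nlinarith
  have hkpos : (1 : ℝ) ≤ k := by exact_mod_cast hk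
  have h3 : (1 / 2 : ℝ) * (r : ℝ) ^ k ≤ ((r + 1 - k : ℕ) : ℝ) ^ k := by
    rw [Nat.cast_sub hkr]
    push_cast
    have hrr : (r : ℝ) = 2 * k ^ 2 := by rw [hr]; push_cast; ring
    have hb := one_add_mul_le_pow (a := -(1 / (2 * k) : ℝ)) (by
      have : (1 / (2 * k) : ℝ) ≤ 1 := by
        rw [div_le_one (by positivity)]; linarith
      linarith) k
    have e1 : 1 + (k : ℝ) * -(1 / (2 * k) : ℝ) = 1 / 2 := by field_simp; norm_num
    rw [e1] at hb
    have h0 : (0 : ℝ) ≤ 1 + -(1 / (2 * k) : ℝ) := by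
      have : (1 / (2 * k) : ℝ) ≤ 1 := by
        rw [div_le_one (by positivity)]; linarith
      linarith
    calc (1 / 2 : ℝ) * (r : ℝ) ^ k ≤ (1 + -(1 / (2 * k) : ℝ)) ^ k * (r : ℝ) ^ k := by gcongr
      _ = ((1 + -(1 / (2 * k) : ℝ)) * r) ^ k := (mul_pow _ _ _).symm
      _ ≤ _ := by
        refine pow_le_pow_left₀ (by positivity) ?_ k
        rw [hrr]
        have : (1 + -(1 / (2 * k) : ℝ)) * (2 * k ^ 2) = 2 * k ^ 2 - k := by
          field_simp
          ring
        rw [this]; linarith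
  have h4 : ((r + 1 - k : ℕ) : ℝ) ^ k * (n : ℝ) ^ k ≤ ((r.descFactorial k * n ^ k : ℕ) : ℝ) := by
    exact_mod_cast Nat.mul_le_mul_right _ h2
  calc (1 / 2 : ℝ) * ((r * n : ℕ) : ℝ) ^ k = ((1 / 2 : ℝ) * (r : ℝ) ^ k) * (n : ℝ) ^ k := by
        push_cast; rw [mul_pow]; ring
    _ ≤ ((r + 1 - k : ℕ) : ℝ) ^ k * (n : ℝ) ^ k := by gcongr
    _ ≤ _ := h4.trans (by exact_mod_cast h1)

lemma sym_update {V : Type*} {m : ℕ} (g : (Fin (m + 1) → V) → Bool) (hg : IsSymmetric g)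
    (i : Fin (m + 1)) (w : Fin (m + 1) → V) (x : V) :
    g (Function.update w i x) =
      g (Fin.snoc (α := fun _ => V) (fun l => w (Equiv.swap i (Fin.last m) l.castSucc)) x) := by
  rw [← hg (Equiv.swap i (Fin.last m)) (Function.update w i x)]
  congr 1
  ext l
  refine Fin.lastCases ?_ (fun l => ?_) l
  · simp
  · rw [Fin.snoc_castSucc, Function.comp, Function.update_of_ne]
    intro h
    have h2 : l.castSucc = Equiv.swap i (Fin.last m) i := by
      have h3 := congrArg (Equiv.swap i (Fin.last m)) h
      rwa [Equiv.swap_apply_self] at h3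
    rw [Equiv.swap_apply_left] at h2
    exact absurd h2 (Fin.castSucc_lt_last l).ne

theorem main (m : ℕ) :
    ∃ g : (Fin (m + 2) → ℕ) → Bool, IsSymmetric g ∧
      ∀ G : Set ((Fin (m + 1) → ℕ) → Bool), IsDistinguishingClass G →
        gvcDim (m + 1) G ≠ ⊤ →
        ∀ ε : ℝ, 0 < ε →
          ∃ p₁ p₂ : ℕ → ℝ, IsDist p₁ ∧ IsDist p₂ ∧
            IPM G p₁ p₂ < ε ∧ |LP p₁ g - LP p₂ g| > 1 / 4 := by
  classical
  obtain ⟨r, hr⟩ : ∃ r, r = 2 * (m + 2) ^ 2 := ⟨_, rfl⟩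
  have hr0 : 0 < r := by rw [hr]; positivity
  choose Q P val σ hsep hgood using fun n => instance_exists m r n
  let Φ : (n : ℕ) → (c : Fin (m + 2) → Fin (Q n)) → (fl : Bool) → Fin r × Fin n → ℕ :=
    fun n c fl x => enc n x.1 (val n c x.1) x.2 (xor fl (σ n c x.1 x.2))
  let g : (Fin (m + 2) → ℕ) → Bool := fun w => decide (∃ n c, ∃ t : Fin (m + 2) → Fin r × Fin n,
    Function.Injective (fun l => (t l).1) ∧ w = Φ n c false ∘ t)
  refine ⟨g, ?_, ?_⟩
  · intro τ w
    simp only [g]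
    congr 1
    apply propext
    constructor
    · rintro ⟨n, c, t, ht, hw⟩
      refine ⟨n, c, t ∘ τ.symm, ht.comp τ.symm.injective, ?_⟩
      rw [← Function.comp_assoc, ← hw]
      ext l; simp
    · rintro ⟨n, c, t, ht, hw⟩
      refine ⟨n, c, t ∘ τ, ht.comp τ.injective, ?_⟩
      rw [hw]; rfl
  intro G hG hfin ε hε
  obtain ⟨d, hd⟩ := ENat.ne_top_iff_exists.1 hfin
  set ε₁ : ℝ := ε / (2 * (m + 1)) with hε₁
  have hε₁0 : 0 < ε₁ := by positivity
  obtain ⟨n, hn, hbad⟩ := exists_n d m r ε₁ hε₁0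
  have hn0 : 0 < n := hn
  let E : Fin r × Fin (P n) × Fin n × Bool → ℕ := fun x => enc n x.1 x.2.1 x.2.2.1 x.2.2.2
  let D : (Fin m → Fin r × Fin (P n) × Fin n × Bool) → Fin r → Fin (P n) →
      Set (Fin n × Bool → Bool) := fun u i a =>
    (fun c : ℕ → Bool => c ∘ fun y : Fin n × Bool => E (i, a, y)) ''
      ((fun g : (Fin (m + 1) → ℕ) → Bool => fun x => g (Fin.snoc (α := fun _ => ℕ) (E ∘ u) x)) '' G)
  have hD : ∀ u i a, VCle (D u i a) d := by
    intro u i a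
    refine vcle_pullback _ d (slice_vc d m G (by rw [← hd]) (E ∘ u)) _ ?_
    rintro ⟨j, b⟩ ⟨j', b'⟩ h
    have := enc_inj h
    simp only [Prod.mk.injEq]
    exact ⟨Fin.ext this.2.2.2.1, this.2.2.2.2⟩
  obtain ⟨c, hc⟩ := hgood n (fun u i a => badSet (D u i a) ε₁) (fun u i a => hbad _ (hD u i a))
  have : Nonempty (Fin r × Fin n) := ⟨(⟨0, hr0⟩, ⟨0, hn0⟩)⟩
  have hcard : Fintype.card (Fin r × Fin n) = r * n := by simp
  have hN : (0 : ℝ) < ((r * n : ℕ) : ℝ) := by exact_mod_cast Nat.mul_pos hr0 hn0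
  refine ⟨unif (Φ n c false), unif (Φ n c true), unif_isDist _, unif_isDist _, ?_, ?_⟩
  · have key : ∀ h ∈ G, |LP (unif (Φ n c false)) h - LP (unif (Φ n c true)) h| ≤ ε / 2 := by
      intro h hh
      rw [LP_unif, LP_unif, ← mul_sub, ← Finset.sum_sub_distrib, hcard]
      let R : Set ℕ := {v | ∃ z : Fin r × Fin n × Bool, v = E (z.1, val n c z.1, z.2)}
      have hyb := hybrid (Φ n c false) (Φ n c true) R
        (fun a => ⟨(a.1, a.2, xor false (σ n c a.1 a.2)), rfl⟩)
        (fun a => ⟨(a.1, a.2, xor true (σ n c a.1 a.2)), rfl⟩)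
        (ε₁ * (r * n : ℕ)) (m + 1) (fun w => if h w then (1 : ℝ) else 0) (by
          intro i w hw
          choose z hz using hw
          simp only [sym_update h (hG h hh)]
          rw [Fintype.sum_prod_type]
          refine (Finset.abs_sum_le_sum_abs _ _).trans ?_
          have : ∀ i' ∈ (Finset.univ : Finset (Fin r)), |∑ j : Fin n,
              ((if h (Fin.snoc (α := fun _ => ℕ)
                (fun l => w (Equiv.swap i (Fin.last m) l.castSucc)) (Φ n c false (i', j)))
                then (1 : ℝ) else 0) - (if h (Fin.snoc (α := fun _ => ℕ)
                (fun l => w (Equiv.swap i (Fin.last m) l.castSucc)) (Φ n c true (i', j)))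
                then (1 : ℝ) else 0))| ≤ ε₁ * n := by
            intro i' _
            have hb := hc (fun l => z (Equiv.swap i (Fin.last m) l.castSucc)) i'
            simp only [badSet, Finset.mem_filter, Finset.mem_univ, true_and, not_exists, not_and,
              not_lt] at hb
            have hb2 := hb _ ⟨_, ⟨h, hh, rfl⟩, rfl⟩
            have ew : (fun l : Fin m => w (Equiv.swap i (Fin.last m) l.castSucc)) =
              E ∘ (fun l : Fin m => ((z (Equiv.swap i (Fin.last m) l.castSucc)).1,
                val n c (z (Equiv.swap i (Fin.last m) l.castSucc)).1,
                (z (Equiv.swap i (Fin.last m) l.castSucc)).2)) := by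
              ext l
              exact hz _
            rw [ew]
            simpa [Φ, E, Function.comp] using hb2
          refine (Finset.sum_le_sum this).trans (le_of_eq ?_)
          simp only [Finset.sum_const, Finset.card_univ, Fintype.card_fin, nsmul_eq_mul]
          push_cast; ring)
      rw [hcard] at hyb
      rw [abs_mul, abs_of_nonneg (by positivity)]
      calc _ ≤ (1 / ((r * n : ℕ) : ℝ)) ^ (m + 1) * (((m + 1 : ℕ) : ℝ) * (ε₁ * (r * n : ℕ)) *
            ((r * n : ℕ) : ℝ) ^ (m + 1 - 1)) := by gcongr
        _ = ε / 2 := by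
          rw [hε₁]
          generalize ((r * n : ℕ) : ℝ) = N at *
          rw [Nat.add_sub_cancel, div_pow, one_pow, pow_succ]
          push_cast
          field_simp
    have : IPM G (unif (Φ n c false)) (unif (Φ n c true)) ≤ ε / 2 := by
      unfold IPM
      refine Real.iSup_le (fun h => Real.iSup_le (fun hh => key h hh) (by positivity))
        (by positivity)
    linarith
  · have z2 : LP (unif (Φ n c true)) g = 0 := by
      rw [LP_unif]
      have : ∀ t : Fin (m + 2) → Fin r × Fin n, g (Φ n c true ∘ t) = false := by
        intro t
        simp only [g, decide_eq_false_iff_not]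
        rintro ⟨n', c', t', ht', he⟩
        have h1 : ∀ l, enc n (t l).1 (val n c (t l).1) (t l).2 (xor true (σ n c (t l).1 (t l).2))
          = enc n' (t' l).1 (val n' c' (t' l).1) (t' l).2
            (xor false (σ n' c' (t' l).1 (t' l).2)) := fun l => congrFun he l
        obtain rfl : n = n' := (enc_inj (h1 0)).1
        have h2 : ∀ l, t l = t' l := fun l =>
          Prod.ext (Fin.ext (enc_inj (h1 l)).2.1) (Fin.ext (enc_inj (h1 l)).2.2.2.1)
        obtain rfl : t = t' := funext h2
        obtain rfl : c = c' := hsep n c c' _ ht' fun l => Fin.ext (enc_inj (h1 l)).2.2.1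
        have := (enc_inj (h1 0)).2.2.2.2
        simp at this
      simp [this]
    have z1 : 1 / 2 ≤ LP (unif (Φ n c false)) g := by
      rw [LP_unif, hcard]
      have h1 := inj_count (m + 2) r n (by omega) hr
      have h2 : (((Finset.univ : Finset (Fin (m + 2) → Fin r × Fin n)).filter
        (fun t => Function.Injective (fun l => (t l).1))).card : ℝ) ≤
        ∑ t : Fin (m + 2) → Fin r × Fin n, (if g (Φ n c false ∘ t) then (1 : ℝ) else 0) := by
        rw [Finset.card_filter]
        push_cast
        refine Finset.sum_le_sum fun t _ => ?_
        by_cases ht : Function.Injective (fun l => (t l).1)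
        · have : g (Φ n c false ∘ t) = true := by
            simp only [g, decide_eq_true_eq]
            exact ⟨n, c, t, ht, rfl⟩
          simp [this, ht]
        · rw [if_neg ht]
          split_ifs <;> norm_num
      have h3 := h1.trans h2
      rw [one_div ((r * n : ℕ) : ℝ), inv_pow, ← div_eq_inv_mul, le_div_iff₀ (by positivity)]
      exact h3
    rw [z2, sub_zero, abs_of_nonneg (by linarith)]
    linarith

/-- a single `k`-distinguisher beats every finite-gVC
`(k−1)`-distinguishing class (Theorem `main_expressivek`). -/
theorem stmt11 (k : ℕ) (hk : 2 ≤ k) :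
    ∃ g : (Fin k → ℕ) → Bool, IsSymmetric g ∧
      ∀ G : Set ((Fin (k - 1) → ℕ) → Bool), IsDistinguishingClass G →
        gvcDim (k - 1) G ≠ ⊤ →
        ∀ ε : ℝ, 0 < ε →
          ∃ p₁ p₂ : ℕ → ℝ, IsDist p₁ ∧ IsDist p₂ ∧
            IPM G p₁ p₂ < ε ∧ |LP p₁ g - LP p₂ g| > 1 / 4 := by
  obtain ⟨m, rfl⟩ : ∃ m, k = m + 2 := ⟨k - 2, by omega⟩
  exact main m

end GraphDisc
end

section
/- Let V be a countably infinite set, k ≥ 2, and let G be a (k−1)-distinguishing class over V with finite graph VC dimension. Then for every ε > 0 there exist two finitely supported probability distributions q₁ and q₂ on V with disjoint supports such that IPM_G(q₁,q₂) < ε. -/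
open scoped BigOperators

namespace GraphDisc

lemma gvc_bound {V : Type*} (d : ℕ) : ∀ (m : ℕ) (G : Set ((Fin (m + 1) → V) → Bool)),
    gvcDim (m + 1) G ≤ (d : ℕ∞) → ∀ (u : Fin m → V) (T : Finset V),
    (∀ f : V → Bool, ∃ g ∈ G, ∀ x ∈ T, g (Fin.snoc (α := fun _ => V) u x) = f x) →
    T.card ≤ d := by
  intro m
  induction m with
  | zero =>
    intro G hG u T hT
    have hG' : vcDim G ≤ (d : ℕ∞) := hG
    let e : V ↪ (Fin 1 → V) := ⟨fun x _ => x, fun x y h => congrFun h 0⟩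
    have hs : Shatters G (T.map e) := by
      intro f
      obtain ⟨g, hg, h⟩ := hT (fun x => f (e x))
      refine ⟨g, hg, ?_⟩
      intro y hy
      obtain ⟨x, hx, rfl⟩ := Finset.mem_map.1 hy
      have := h x hx
      have h2 : (Fin.snoc (α := fun _ => V) u x : Fin 1 → V) = e x := by
        funext i
        have : i = Fin.last 0 := Fin.ext (by have := i.isLt; simp)
        subst this
        exact Fin.snoc_last (α := fun _ => V) x u
      rw [← h2] at this ⊢
      exact this
    have h1 : ((T.map e).card : ℕ∞) ≤ vcDim G := by
      unfold vcDim
      exact le_iSup₂_of_le (T.map e) hs le_rfl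
    have h2 := h1.trans hG'
    rw [Finset.card_map] at h2
    exact_mod_cast h2
  | succ m ih =>
    intro G hG u T hT
    have hG' : (⨆ v : V, gvcDim (m + 1) (proj v '' G)) ≤ (d : ℕ∞) := hG
    refine ih (proj (u 0) '' G) ((le_iSup (fun v => gvcDim (m + 1) (proj v '' G)) (u 0)).trans hG')
      (Fin.tail u) T ?_
    intro f
    obtain ⟨g, hg, h⟩ := hT f
    refine ⟨_, ⟨g, hg, rfl⟩, ?_⟩
    intro x hx
    rw [← h x hx]
    unfold proj
    congr 1
    rw [Fin.cons_snoc_eq_snoc_cons, Fin.cons_self_tail]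

lemma hybrid_s12 {α : Type*} [Fintype α] (a b : α → ℝ) (ha : ∀ x, 0 ≤ a x) (hb : ∀ x, 0 ≤ b x)
    (ha1 : ∑ x, a x = 1) (hb1 : ∑ x, b x = 1) (δ : ℝ) : ∀ (n : ℕ) (F : (Fin n → α) → ℝ),
    (∀ (j : Fin n) (w : Fin n → α), |∑ x, (a x - b x) * F (Function.update w j x)| ≤ δ) →
    |∑ w : Fin n → α, (∏ i, a (w i) - ∏ i, b (w i)) * F w| ≤ n * δ := by
  intro n
  induction n with
  | zero => intro F _; simp
  | succ n ih =>
    intro F hF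
    have hB : ∑ w : Fin n → α, ∏ i, b (w i) = 1 := by
      have := Finset.prod_univ_sum (fun _ : Fin n => (Finset.univ : Finset α)) (fun _ x => b x)
      rw [Fintype.piFinset_univ] at this
      rw [← this]; simp [hb1]
    have hsplit : ∑ w : Fin (n+1) → α, (∏ i, a (w i) - ∏ i, b (w i)) * F w
        = ∑ x, a x * (∑ w : Fin n → α, (∏ i, a (w i) - ∏ i, b (w i)) *
            F (Fin.cons (α := fun _ => α) x w))
          + ∑ w : Fin n → α, (∏ i, b (w i)) * ∑ x, (a x - b x) *
            F (Fin.cons (α := fun _ => α) x w) := by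
      rw [← (Fin.consEquiv (fun _ : Fin (n+1) => α)).sum_comp, Fintype.sum_prod_type]
      simp only [Finset.mul_sum]
      rw [Finset.sum_comm (s := (Finset.univ : Finset (Fin n → α))), ← Finset.sum_add_distrib]
      refine Finset.sum_congr rfl fun x _ => ?_
      rw [← Finset.sum_add_distrib]
      refine Finset.sum_congr rfl fun w _ => ?_
      simp only [Fin.consEquiv, Equiv.coe_fn_mk, Fin.prod_univ_succ, Fin.cons_zero, Fin.cons_succ]
      ring
    rw [hsplit]
    have h1 : |∑ x, a x * (∑ w : Fin n → α, (∏ i, a (w i) - ∏ i, b (w i)) *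
            F (Fin.cons (α := fun _ => α) x w))| ≤ n * δ := by
      refine (Finset.abs_sum_le_sum_abs _ _).trans ?_
      calc _ ≤ ∑ x, a x * (n * δ) := by
            refine Finset.sum_le_sum fun x _ => ?_
            rw [abs_mul, abs_of_nonneg (ha x)]
            refine mul_le_mul_of_nonneg_left ?_ (ha x)
            refine ih (fun w => F (Fin.cons (α := fun _ => α) x w)) ?_
            intro j w
            have := hF j.succ (Fin.cons (α := fun _ => α) x w)
            simpa only [Fin.cons_update] using this
        _ = _ := by rw [← Finset.sum_mul, ha1, one_mul]
    have h2 : |∑ w : Fin n → α, (∏ i, b (w i)) * ∑ x, (a x - b x) *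
            F (Fin.cons (α := fun _ => α) x w)| ≤ δ := by
      refine (Finset.abs_sum_le_sum_abs _ _).trans ?_
      calc _ ≤ ∑ w : Fin n → α, (∏ i, b (w i)) * δ := by
            refine Finset.sum_le_sum fun w _ => ?_
            have hp : 0 ≤ ∏ i, b (w i) := Finset.prod_nonneg fun i _ => hb _
            rw [abs_mul, abs_of_nonneg hp]
            refine mul_le_mul_of_nonneg_left ?_ hp
            by_cases hα : Nonempty α
            · obtain ⟨y⟩ := hα
              have := hF 0 (Fin.cons (α := fun _ => α) y w)
              simpa only [Fin.update_cons_zero] using this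
            · exfalso
              rw [not_nonempty_iff] at hα
              simp at ha1
        _ = _ := by rw [← Finset.sum_mul, hB, one_mul]
    refine (abs_add_le _ _).trans ?_
    push_cast
    linarith

/-- sign of a Boolean -/
def sg (b : Bool) : ℝ := if b then 1 else -1

lemma mgf (N : ℕ) (l : ℝ) (c : Fin N → ℝ) (hc : ∀ i, |c i| ≤ 1) :
    ∑ σ : Fin N → Bool, Real.exp (l * ∑ i, sg (σ i) * c i)
      ≤ 2 ^ N * Real.exp (l ^ 2 * N / 2) := by
  have h := Finset.prod_univ_sum (fun _ : Fin N => (Finset.univ : Finset Bool))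
    (fun i b => Real.exp (l * (sg b * c i)))
  rw [Fintype.piFinset_univ] at h
  have h' : ∑ σ : Fin N → Bool, Real.exp (l * ∑ i, sg (σ i) * c i)
      = ∏ i, ∑ b, Real.exp (l * (sg b * c i)) := by
    rw [h]
    refine Finset.sum_congr rfl fun σ _ => ?_
    rw [Finset.mul_sum, Real.exp_sum]
  rw [h']
  calc _ ≤ ∏ _i : Fin N, (2 * Real.exp (l ^ 2 / 2)) := by
        refine Finset.prod_le_prod (fun i _ => Finset.sum_nonneg fun _ _ => (Real.exp_pos _).le) ?_
        intro i _
        have h1 : ∑ b, Real.exp (l * (sg b * c i)) = 2 * Real.cosh (l * c i) := by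
          simp [sg, Real.cosh_eq]; ring
        rw [h1]
        have h2 := Real.cosh_le_exp_half_sq (l * c i)
        have h3 : Real.exp ((l * c i) ^ 2 / 2) ≤ Real.exp (l ^ 2 / 2) := by
          apply Real.exp_le_exp.2
          have : (c i)^2 ≤ 1 := (sq_le_one_iff_abs_le_one _).2 (hc i)
          nlinarith [sq_nonneg l]
        linarith
    _ = _ := by
        rw [Finset.prod_const, mul_pow, ← Real.exp_nat_mul]
        simp
        ring

lemma disc {ι : Type*} (I : Finset ι) (N : ℕ) (l : ℝ) (hl : 0 < l) (c : ι → Fin N → ℝ)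
    (hc : ∀ j i, |c j i| ≤ 1) (hI : 2 * (I.card : ℝ) < Real.exp (l ^ 2 * N / 2)) :
    ∃ σ : Fin N → Bool, ∀ j ∈ I, |∑ i, sg (σ i) * c j i| ≤ l * N := by
  by_contra! hcon
  have h1 : ∀ σ : Fin N → Bool, Real.exp (l ^ 2 * N) ≤
      ∑ j ∈ I, (Real.exp (l * ∑ i, sg (σ i) * c j i) + Real.exp ((-l) * ∑ i, sg (σ i) * c j i)) := by
    intro σ
    obtain ⟨j, hj, hlt⟩ := hcon σ
    refine le_trans ?_ (Finset.single_le_sum (f := fun j => Real.exp (l * ∑ i, sg (σ i) * c j i) +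
      Real.exp ((-l) * ∑ i, sg (σ i) * c j i)) (fun _ _ => by positivity) hj)
    rcases lt_abs.1 hlt with h | h
    · have : Real.exp (l ^ 2 * N) ≤ Real.exp (l * ∑ i, sg (σ i) * c j i) :=
        Real.exp_le_exp.2 (by nlinarith)
      have := Real.exp_pos ((-l) * ∑ i, sg (σ i) * c j i)
      linarith
    · have : Real.exp (l ^ 2 * N) ≤ Real.exp ((-l) * ∑ i, sg (σ i) * c j i) :=
        Real.exp_le_exp.2 (by nlinarith)
      have := Real.exp_pos (l * ∑ i, sg (σ i) * c j i)
      linarith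
  have h2 := Finset.sum_le_sum (s := Finset.univ) fun σ _ => h1 σ
  rw [Finset.sum_comm] at h2
  have h3 : ∑ j ∈ I, ∑ σ : Fin N → Bool, (Real.exp (l * ∑ i, sg (σ i) * c j i) +
      Real.exp ((-l) * ∑ i, sg (σ i) * c j i)) ≤
      ∑ j ∈ I, (2 * (2 ^ N * Real.exp (l ^ 2 * N / 2))) := by
    refine Finset.sum_le_sum fun j _ => ?_
    rw [Finset.sum_add_distrib]
    have e1 := mgf N l (c j) (hc j)
    have e2 := mgf N (-l) (c j) (hc j)
    rw [neg_sq] at e2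
    linarith
  have h4 := h2.trans h3
  simp only [Finset.sum_const, Finset.card_univ, Fintype.card_fun, Fintype.card_bool,
    Fintype.card_fin, nsmul_eq_mul] at h4
  push_cast at h4
  have h5 : Real.exp (l ^ 2 * N) = Real.exp (l ^ 2 * N / 2) * Real.exp (l ^ 2 * N / 2) := by
    rw [← Real.exp_add]; ring_nf
  rw [h5] at h4
  have hE := Real.exp_pos (l ^ 2 * N / 2)
  have h2N : (0:ℝ) < 2 ^ N := by positivity
  have h6 := mul_lt_mul_of_pos_right hI (mul_pos h2N hE)
  nlinarith

lemma exists_N (C : ℝ) (D : ℕ) (s : ℝ) (hs : 0 < s) :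
    ∃ N : ℕ, 1 ≤ N ∧ C * (N : ℝ) ^ D < Real.exp (s * N) := by
  have h := (isLittleO_pow_exp_pos_mul_atTop D hs)
  have h2 := (h.comp_tendsto tendsto_natCast_atTop_atTop).def
    (c := 1 / (|C| + 1)) (by positivity)
  obtain ⟨N, hN, hN1⟩ := (h2.and (Filter.eventually_ge_atTop 1)).exists
  refine ⟨N, hN1, ?_⟩
  simp only [Function.comp, Real.norm_eq_abs, Real.abs_exp] at hN
  rw [abs_of_nonneg (by positivity)] at hN
  have hE := Real.exp_pos (s * N)
  have hC := le_abs_self C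
  have hC0 := abs_nonneg C
  have hp : (0:ℝ) < (N:ℝ)^D := by
    have : (0:ℝ) < N := by exact_mod_cast hN1
    positivity
  rw [one_div, inv_mul_eq_div, le_div_iff₀ (by positivity)] at hN
  nlinarith

lemma card_fam {α : Type*} [Fintype α] [DecidableEq α] (h1 : 1 ≤ Fintype.card α)
    (A : Finset (Finset α)) (d : ℕ)
    (h : ∀ T : Finset α, A.Shatters T → T.card ≤ d) :
    A.card ≤ (d + 1) * Fintype.card α ^ d := by
  have hv : A.vcDim ≤ d := by
    unfold Finset.vcDim
    exact Finset.sup_le fun T hT => h T (Finset.mem_shatterer.1 hT)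
  refine A.card_le_card_shatterer.trans (Finset.card_shatterer_le_sum_vcDim.trans ?_)
  calc _ ≤ ∑ k ∈ Finset.Iic A.vcDim, Fintype.card α ^ d := by
        refine Finset.sum_le_sum fun k hk => ?_
        exact (Nat.choose_le_pow _ _).trans
          (Nat.pow_le_pow_right h1 ((Finset.mem_Iic.1 hk).trans hv))
    _ ≤ _ := by
        rw [Finset.sum_const, smul_eq_mul, Nat.card_Iic]
        exact Nat.mul_le_mul_right _ (by omega)

lemma LP_extend {V α : Type*} [Fintype α] {n : ℕ} (e : α ↪ V) (a : α → ℝ)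
    (g : (Fin (n+1) → V) → Bool) :
    LP (Function.extend e a 0) g =
      ∑ w : Fin (n+1) → α, (∏ i, a (w i)) * (if g (e ∘ w) then 1 else 0) := by
  unfold LP
  have hinj : Function.Injective (fun w : Fin (n+1) → α => e ∘ w) :=
    e.injective.comp_left
  rw [← hinj.tsum_eq, tsum_fintype]
  · refine Finset.sum_congr rfl fun w _ => ?_
    simp [e.injective.extend_apply]
  · intro w hw
    have hw' : (∏ i, Function.extend e a 0 (w i)) ≠ 0 := left_ne_zero_of_mul hw
    have : ∀ i, ∃ x, e x = w i := by
      intro i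
      by_contra hx
      exact (Finset.prod_ne_zero_iff.1 hw') i (Finset.mem_univ _)
        (by rw [Function.extend_apply' _ _ _ hx]; rfl)
    choose f hf using this
    exact ⟨f, funext hf⟩

lemma dist_extend {V α : Type*} [Fintype α] (e : α ↪ V) (a : α → ℝ) (ha : ∀ x, 0 ≤ a x)
    (ha1 : ∑ x, a x = 1) : IsDist (Function.extend e a 0) := by
  constructor
  · intro v
    by_cases h : ∃ x, e x = v
    · obtain ⟨x, rfl⟩ := h
      rw [e.injective.extend_apply]; exact ha x
    · rw [Function.extend_apply' _ _ _ h]; simp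
  · rw [hasSum_extend_zero e.injective, ← ha1]
    exact hasSum_fintype a

lemma supp_extend {V α : Type*} (e : α ↪ V) (a : α → ℝ) :
    Function.support (Function.extend e a 0) = e '' Function.support a := by
  ext v
  by_cases h : ∃ x, e x = v
  · obtain ⟨x, rfl⟩ := h
    simp [e.injective.extend_apply]
  · rw [Function.mem_support, Function.extend_apply' _ _ _ h]
    simp only [Pi.zero_apply, ne_eq, not_true_eq_false, false_iff]
    rintro ⟨x, _, hx⟩
    exact h ⟨x, hx⟩

lemma update_symm {V α : Type*} {m : ℕ} (e : α → V) (g : (Fin (m+1) → V) → Bool)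
    (hg : IsSymmetric g) (j : Fin (m+1)) (w : Fin (m+1) → α) :
    ∃ u : Fin m → α, ∀ x, g (e ∘ Function.update w j x) =
      g (Fin.snoc (α := fun _ => V) (e ∘ u) (e x)) := by
  refine ⟨fun i => w (Equiv.swap j (Fin.last m) i.castSucc), fun x => ?_⟩
  rw [← hg (Equiv.swap j (Fin.last m))]
  congr 1
  funext i
  refine Fin.lastCases ?_ (fun i => ?_) i
  · simp
  · have : Equiv.swap j (Fin.last m) i.castSucc ≠ j := by
      intro h
      have := congrArg (Equiv.swap j (Fin.last m)) h
      rw [Equiv.swap_apply_self, Equiv.swap_apply_left] at this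
      exact (Fin.castSucc_lt_last i).ne this
    simp [Function.update_of_ne this]

theorem main_aux (V : Type) [Infinite V] (m : ℕ)
    (G : Set ((Fin (m + 1) → V) → Bool)) (hG : IsDistinguishingClass G)
    (hfin : gvcDim (m + 1) G ≠ ⊤) (ε : ℝ) (hε : 0 < ε) :
    ∃ q₁ q₂ : V → ℝ, IsDist q₁ ∧ IsDist q₂ ∧
      (Function.support q₁).Finite ∧ (Function.support q₂).Finite ∧
      Disjoint (Function.support q₁) (Function.support q₂) ∧
      IPM G q₁ q₂ < ε := by
  classical
  obtain ⟨d, hd⟩ := ENat.ne_top_iff_exists.1 hfin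
  have hvc := gvc_bound d m G hd.symm.le
  set l : ℝ := ε / (2 * (m + 1)) with hl
  have hl0 : 0 < l := by positivity
  obtain ⟨N, hN1, hN⟩ := exists_N (2 * (2 ^ m * ((d + 1) * 2 ^ d))) (m + d) (l ^ 2 / 2) (by positivity)
  have hN0 : (0:ℝ) < N := by exact_mod_cast hN1
  let e : Fin N × Bool ↪ V := (Fintype.equivFin (Fin N × Bool)).toEmbedding.trans
    (Fin.valEmbedding.trans (Infinite.natEmbedding V))
  let pat (u : Fin m → Fin N × Bool) (g : (Fin (m+1) → V) → Bool) : Finset (Fin N × Bool) :=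
    Finset.univ.filter fun x => g (Fin.snoc (α := fun _ => V) (e ∘ u) (e x)) = true
  let A (u : Fin m → Fin N × Bool) : Finset (Finset (Fin N × Bool)) :=
    Finset.univ.filter fun S => ∃ g ∈ G, pat u g = S
  have hcard : Fintype.card (Fin N × Bool) = 2 * N := by simp [mul_comm]
  have hA : ∀ u, (A u).card ≤ (d + 1) * (2 * N) ^ d := by
    intro u
    rw [← hcard]
    refine card_fam (by omega) (A u) d ?_
    intro T hT
    rw [← Finset.card_map e]
    refine hvc (e ∘ u) (T.map e) ?_
    intro f
    obtain ⟨S, hS, hTS⟩ := hT (t := T.filter fun x => f (e x) = true) (Finset.filter_subset _ _)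
    obtain ⟨g, hg, rfl⟩ := (Finset.mem_filter.1 hS).2
    refine ⟨g, hg, ?_⟩
    intro y hy
    obtain ⟨x, hx, rfl⟩ := Finset.mem_map.1 hy
    have := Finset.ext_iff.1 hTS x
    simp only [Finset.mem_inter, hx, true_and, Finset.mem_filter, pat, Finset.mem_univ] at this
    exact Bool.eq_iff_iff.2 this
  let I : Finset (Finset (Fin N × Bool)) := Finset.univ.biUnion A
  have hI : I.card ≤ (2 * N) ^ m * ((d + 1) * (2 * N) ^ d) := by
    refine (Finset.card_biUnion_le_card_mul _ _ _ fun u _ => hA u).trans ?_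
    rw [Finset.card_univ, Fintype.card_fun, hcard, Fintype.card_fin]
  let ind (S : Finset (Fin N × Bool)) (x : Fin N × Bool) : ℝ := if x ∈ S then 1 else 0
  obtain ⟨σ, hσ⟩ := disc I N l hl0 (fun S i => ind S (i, true) - ind S (i, false))
    (by
      intro S i
      simp only [ind]
      split_ifs <;> simp)
    (by
      have : (I.card : ℝ) ≤ (2 * N) ^ m * ((d + 1) * (2 * N) ^ d) := by exact_mod_cast hI
      have h2 : l ^ 2 * N / 2 = l ^ 2 / 2 * N := by ring
      rw [h2]
      refine lt_of_le_of_lt ?_ hN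
      calc _ ≤ 2 * (((2 * N) ^ m * ((d + 1) * (2 * N) ^ d) : ℝ)) := by linarith
        _ = _ := by rw [mul_pow, mul_pow, pow_add]; ring)
  let a : Fin N × Bool → ℝ := fun x => if x.2 = σ x.1 then (1 / N : ℝ) else 0
  let b : Fin N × Bool → ℝ := fun x => if x.2 = σ x.1 then 0 else (1 / N : ℝ)
  have ha : ∀ x, 0 ≤ a x := by intro x; simp only [a]; split_ifs <;> positivity
  have hb : ∀ x, 0 ≤ b x := by intro x; simp only [b]; split_ifs <;> positivity
  have ha1 : ∑ x, a x = 1 := by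
    simp only [a, Fintype.sum_prod_type, Finset.sum_ite_eq', Finset.mem_univ, if_true]
    simp [hN0.ne']
  have hb1 : ∑ x, b x = 1 := by
    have : ∀ i, ∑ c : Bool, b (i, c) = 1 / N := by
      intro i
      cases h : σ i <;> simp [b, h]
    rw [Fintype.sum_prod_type, Finset.sum_congr rfl fun i _ => this i]
    simp [hN0.ne']
  refine ⟨Function.extend e a 0, Function.extend e b 0, dist_extend e a ha ha1,
    dist_extend e b hb hb1, ?_, ?_, ?_, ?_⟩
  · rw [supp_extend]; exact (Set.toFinite _).image _
  · rw [supp_extend]; exact (Set.toFinite _).image _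
  · rw [supp_extend, supp_extend, Set.disjoint_image_iff e.injective, Set.disjoint_left]
    intro x hx hy
    simp only [Function.mem_support, a, b] at hx hy
    split_ifs at hx hy <;> simp_all
  · have key : ∀ g ∈ G, |LP (Function.extend e a 0) g - LP (Function.extend e b 0) g| ≤ ε / 2 := by
      intro g hg
      rw [LP_extend, LP_extend, ← Finset.sum_sub_distrib]
      simp only [← sub_mul]
      have := hybrid_s12 a b ha hb ha1 hb1 l (m+1) (fun w => if g (e ∘ w) then 1 else 0) ?_
      · refine this.trans (le_of_eq ?_)
        rw [hl]; push_cast; field_simp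
      intro j w
      obtain ⟨u, hu⟩ := update_symm e g (hG g hg) j w
      simp only [hu]
      have hmem : pat u g ∈ I := by
        refine Finset.mem_biUnion.2 ⟨u, Finset.mem_univ _, ?_⟩
        exact Finset.mem_filter.2 ⟨Finset.mem_univ _, g, hg, rfl⟩
      have h1 := hσ _ hmem
      have h2 : ∑ x, (a x - b x) *
          (if g (Fin.snoc (α := fun _ => V) (e ∘ u) (e x)) = true then (1:ℝ) else 0)
          = (1 / N) * ∑ i, sg (σ i) * (ind (pat u g) (i, true) - ind (pat u g) (i, false)) := by
        rw [Fintype.sum_prod_type, Finset.mul_sum]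
        refine Finset.sum_congr rfl fun i _ => ?_
        have hind : ∀ x, ind (pat u g) x =
          (if g (Fin.snoc (α := fun _ => V) (e ∘ u) (e x)) = true then (1:ℝ) else 0) := by
          intro x
          simp only [ind, pat, Finset.mem_filter, Finset.mem_univ, true_and]
        rw [Fintype.sum_bool, ← hind, ← hind]
        cases h : σ i <;> simp [a, b, h, sg] <;> ring
      rw [h2, abs_mul, abs_of_pos (by positivity), one_div, inv_mul_le_iff₀ hN0]
      linarith
    have hε2 : (0:ℝ) ≤ ε / 2 := by positivity
    have : IPM G (Function.extend e a 0) (Function.extend e b 0) ≤ ε / 2 :=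
      Real.iSup_le (fun g => Real.iSup_le (fun hg => key g hg) hε2) hε2
    linarith

/-- indistinguishable distributions with disjoint supports for
`(k−1)`-distinguishing classes (Claim `disjointk`). -/
theorem stmt12 (V : Type) [Countable V] [Infinite V] (k : ℕ) (hk : 2 ≤ k)
    (G : Set ((Fin (k - 1) → V) → Bool)) (hG : IsDistinguishingClass G)
    (hfin : gvcDim (k - 1) G ≠ ⊤) (ε : ℝ) (hε : 0 < ε) :
    ∃ q₁ q₂ : V → ℝ, IsDist q₁ ∧ IsDist q₂ ∧
      (Function.support q₁).Finite ∧ (Function.support q₂).Finite ∧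
      Disjoint (Function.support q₁) (Function.support q₂) ∧
      IPM G q₁ q₂ < ε := by
  obtain ⟨m, rfl⟩ : ∃ m, k = m + 2 := ⟨k - 2, by omega⟩
  exact main_aux V m G hG hfin ε hε

end GraphDisc
end
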